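/- arXiv:0909.4250 — 2 statements merged into one kernel-verified Lean document; each statement's English description precedes it below -/
import Mathlib

section
/- Let (X, σ_X) and (Y, σ_Y) be one-sided subshifts over finite alphabets, with Y a factor of X via a one-block factor map π : X → Y. Let Φ = (log φ_n)_{n=1}^∞ ∈ C_sa(X, σ_X) be generated by a sub-multiplicative φ : L(X) → [0,∞), and let ν ∈ M(Y, σ_Y). Define ψ : L(Y) → [0,∞) by ψ(J) = Σ_{I ∈ L(X), |I| = |J|, πI = J} φ(I). Then ψ is sub-multiplicative, and with Ψ ∈ C_sa(Y, σ_Y) the potential generated by ψ, one has sup{ Φ_*(μ) + h_μ(σ_X) − h_ν(σ_Y) : μ ∈ M(X, σ_X), μ ∘ π^{-1} = ν } = Ψ_*(ν). -/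
open MeasureTheory Filter Topology
open scoped Classical ENNReal NNReal

noncomputable section

/-- The left shift on one-sided sequences. -/
def shiftMap {A : Type} : (ℕ → A) → (ℕ → A) := fun x n => x (n + 1)

/-- The cylinder set of a finite word. -/
def cyl {A : Type} (I : List A) : Set (ℕ → A) :=
  {x | ∀ i : Fin I.length, x i = I.get i}

/-- Membership of a word in the language of `X`. -/
def Lang {A : Type} (X : Set (ℕ → A)) (I : List A) : Prop :=
  (cyl I ∩ X).Nonempty

/-- `X` is a (nonempty) one-sided subshift. -/
def IsSubshift {A : Type} [TopologicalSpace A] (X : Set (ℕ → A)) : Prop :=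
  X.Nonempty ∧ IsCompact X ∧ shiftMap '' X ⊆ X

/-- weak `p`-specification -/
def WeakSpecification {A : Type} (X : Set (ℕ → A)) (p : ℕ) : Prop :=
  ∀ I J : List A, Lang X I → Lang X J →
    ∃ K : List A, K.length ≤ p ∧ Lang X (I ++ K ++ J)

/-- `p`-specification -/
def Specification {A : Type} (X : Set (ℕ → A)) (p : ℕ) : Prop :=
  ∀ I J : List A, Lang X I → Lang X J →
    ∃ K : List A, K.length = p ∧ Lang X (I ++ K ++ J)

/-- invariant probability measures supported on `X` (predicate on plain measures) -/
def InvOn {A : Type} [MeasurableSpace A] (X : Set (ℕ → A)) (μ : Measure (ℕ → A)) : Prop :=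
  IsProbabilityMeasure μ ∧ μ.map shiftMap = μ ∧ μ X = 1

/-- the set of shift-invariant probability measures on `X` -/
def MInv {A : Type} [MeasurableSpace A] (X : Set (ℕ → A)) :
    Set (ProbabilityMeasure (ℕ → A)) :=
  {μ | (μ : Measure (ℕ → A)).map shiftMap = (μ : Measure (ℕ → A)) ∧
    (μ : Measure (ℕ → A)) X = 1}

/-- measure of a word: `μ([I] ∩ X)` -/
def mw {A : Type} [MeasurableSpace A] (X : Set (ℕ → A)) (μ : Measure (ℕ → A))
    (I : List A) : ℝ :=
  (μ (cyl I ∩ X)).toReal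

/-- the initial word of length `n` of a sequence -/
def wordOf {A : Type} (x : ℕ → A) (n : ℕ) : List A := List.ofFn (fun i : Fin n => x i)

/-- `n`-block entropy -/
def Hblock {A : Type} [Fintype A] [MeasurableSpace A] (X : Set (ℕ → A))
    (μ : Measure (ℕ → A)) (n : ℕ) : ℝ :=
  -∑ w : Fin n → A, mw X μ (List.ofFn w) * Real.log (mw X μ (List.ofFn w))

/-- measure-theoretic entropy (the limit exists for invariant measures; `liminf` realizes it) -/
def ent {A : Type} [Fintype A] [MeasurableSpace A] (X : Set (ℕ → A))
    (μ : Measure (ℕ → A)) : ℝ :=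
  liminf (fun n : ℕ => Hblock X μ n / n) atTop

/-- extended logarithm: `log t`, with value `⊥` for `t ≤ 0` -/
def elog (t : ℝ) : EReal := if t ≤ 0 then ⊥ else ((Real.log t : ℝ) : EReal)

/-- the integral `∫ log g dμ`, valued in `ℝ ∪ {−∞}` -/
def intlog {Ω : Type*} [MeasurableSpace Ω] (μ : Measure Ω) (g : Ω → ℝ) : EReal :=
  ((∫⁻ x, ENNReal.ofReal (Real.log (g x)) ∂μ : ℝ≥0∞) : EReal) -
    ((∫⁻ x, (if g x ≤ 0 then (⊤ : ℝ≥0∞) else ENNReal.ofReal (-Real.log (g x))) ∂μ : ℝ≥0∞) : EReal)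

/-- sub-additive potential `Φ = (log φ_n)_{n ≥ 1}` -/
def SubaddPot {A : Type} [TopologicalSpace A] (X : Set (ℕ → A))
    (φ : ℕ → (ℕ → A) → ℝ) : Prop :=
  (∀ n, 1 ≤ n → ContinuousOn (φ n) X) ∧
  (∀ n, 1 ≤ n → ∀ x ∈ X, 0 ≤ φ n x) ∧
  ∃ c > (0:ℝ), ∀ n m : ℕ, 1 ≤ n → 1 ≤ m → ∀ x ∈ X,
    φ (n + m) x ≤ c * φ n x * φ m (shiftMap^[n] x)

/-- `Φ_*(μ) = lim (1/n) ∫ log φ_n dμ` (realized as a `liminf` in `EReal`) -/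
def PhiStar {A : Type} [MeasurableSpace A] (μ : Measure (ℕ → A))
    (φ : ℕ → (ℕ → A) → ℝ) : EReal :=
  liminf (fun n : ℕ => (((n : ℝ)⁻¹ : ℝ) : EReal) * intlog μ (φ n)) atTop

/-- sub-multiplicative function on the language of `X` -/
def Submult {A : Type} (X : Set (ℕ → A)) (φ : List A → ℝ) : Prop :=
  (∀ I, Lang X I → 0 ≤ φ I) ∧ φ [] = 1 ∧
  ∃ c > (0:ℝ), ∀ I J : List A, Lang X (I ++ J) → φ (I ++ J) ≤ c⁻¹ * φ I * φ J

/-- the potential generated by a word function -/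
def genPot {A : Type} (φ : List A → ℝ) : ℕ → (ℕ → A) → ℝ := fun n x => φ (wordOf x n)

/-- the scaled potential `cΦ = (log φ_n^c)` -/
def scPot {Ω : Type*} (c : ℝ) (φ : ℕ → Ω → ℝ) : ℕ → Ω → ℝ := fun n x => φ n x ^ c

/-- the "pressure value" `Φ_*(μ) + h_μ` -/
def eqVal {A : Type} [Fintype A] [MeasurableSpace A] (X : Set (ℕ → A))
    (φ : ℕ → (ℕ → A) → ℝ) (μ : ProbabilityMeasure (ℕ → A)) : EReal :=
  PhiStar (μ : Measure (ℕ → A)) φ + ((ent X (μ : Measure (ℕ → A)) : ℝ) : EReal)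

/-- the set of equilibrium states of `Φ` -/
def EqSet {A : Type} [Fintype A] [MeasurableSpace A] (X : Set (ℕ → A))
    (φ : ℕ → (ℕ → A) → ℝ) : Set (ProbabilityMeasure (ℕ → A)) :=
  {μ | μ ∈ MInv X ∧ eqVal X φ μ = ⨆ η ∈ MInv X, eqVal X φ η}

/-- sequence map induced by a one-block map -/
def blockMap {A B : Type} (π : A → B) : (ℕ → A) → (ℕ → B) := fun x n => π (x n)

/-- pushforward of a probability measure under a one-block map -/
def pushM {A B : Type} [MeasurableSpace A] [MeasurableSpace B] (π : A → B)
    (μ : ProbabilityMeasure (ℕ → A)) : Measure (ℕ → B) :=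
  (μ : Measure (ℕ → A)).map (blockMap π)

/-- conditional equilibrium states of `Φ` over `ν` -/
def CondEqSet {A B : Type} [Fintype A] [MeasurableSpace A] [MeasurableSpace B]
    (X : Set (ℕ → A)) (π : A → B) (φ : ℕ → (ℕ → A) → ℝ) (ν : Measure (ℕ → B)) :
    Set (ProbabilityMeasure (ℕ → A)) :=
  {μ | μ ∈ MInv X ∧ pushM π μ = ν ∧
    eqVal X φ μ = ⨆ η ∈ {η | η ∈ MInv X ∧ pushM π η = ν}, eqVal X φ η}

/-- the projected word function `ψ(J) = Σ_{I : πI = J} φ(I)` -/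
def psiProj {A B : Type} [Fintype A] (X : Set (ℕ → A)) (π : A → B) (φ : List A → ℝ)
    (J : List B) : ℝ :=
  ∑ w : Fin J.length → A,
    if Lang X (List.ofFn w) ∧ List.map π (List.ofFn w) = J then φ (List.ofFn w) else 0

/-- `φ^{(2)}(J) = (Σ_{I : πI = J} φ(I)^{1/a₁})^{a₁}` -/
def phiTwo {A B : Type} [Fintype A] (X : Set (ℕ → A)) (π : A → B) (φ : List A → ℝ)
    (a₁ : ℝ) (J : List B) : ℝ :=
  (∑ w : Fin J.length → A,
    if Lang X (List.ofFn w) ∧ List.map π (List.ofFn w) = J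
    then φ (List.ofFn w) ^ a₁⁻¹ else 0) ^ a₁

/-- `a`-weighted pressure value for `k = 2` -/
def wVal2 {A B : Type} [Fintype A] [Fintype B] [MeasurableSpace A] [MeasurableSpace B]
    (X : Set (ℕ → A)) (Y : Set (ℕ → B)) (π : A → B) (φ : ℕ → (ℕ → A) → ℝ)
    (a₁ a₂ : ℝ) (μ : ProbabilityMeasure (ℕ → A)) : EReal :=
  PhiStar (μ : Measure (ℕ → A)) φ +
    ((a₁ * ent X (μ : Measure (ℕ → A)) + a₂ * ent Y (pushM π μ) : ℝ) : EReal)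

/-- the set of `a`-weighted equilibrium states, `k = 2` -/
def WEqSet2 {A B : Type} [Fintype A] [Fintype B] [MeasurableSpace A] [MeasurableSpace B]
    (X : Set (ℕ → A)) (Y : Set (ℕ → B)) (π : A → B) (φ : ℕ → (ℕ → A) → ℝ)
    (a₁ a₂ : ℝ) : Set (ProbabilityMeasure (ℕ → A)) :=
  {μ | μ ∈ MInv X ∧ wVal2 X Y π φ a₁ a₂ μ = ⨆ η ∈ MInv X, wVal2 X Y π φ a₁ a₂ η}

/-- convexity of a set of probability measures -/
def ConvexPM {Ω : Type*} [MeasurableSpace Ω] (S : Set (ProbabilityMeasure Ω)) : Prop :=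
  ∀ μ₁ ∈ S, ∀ μ₂ ∈ S, ∀ t : ℝ, 0 ≤ t → t ≤ 1 → ∀ μ : ProbabilityMeasure Ω,
    (μ : Measure Ω) = ENNReal.ofReal t • (μ₁ : Measure Ω) +
      ENNReal.ofReal (1 - t) • (μ₂ : Measure Ω) → μ ∈ S

/-- extreme points of a set of probability measures -/
def IsExtremePM {Ω : Type*} [MeasurableSpace Ω] (S : Set (ProbabilityMeasure Ω))
    (μ : ProbabilityMeasure Ω) : Prop :=
  μ ∈ S ∧ ∀ μ₁ ∈ S, ∀ μ₂ ∈ S, ∀ t : ℝ, 0 < t → t < 1 →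
    (μ : Measure Ω) = ENNReal.ofReal t • (μ₁ : Measure Ω) +
      ENNReal.ofReal (1 - t) • (μ₂ : Measure Ω) → μ₁ = μ₂

/-- the class `Ω_w(A*, p)` -/
def OmegaW {A : Type} [Fintype A] (p : ℕ) (f : List A → ℝ) : Prop :=
  (∀ I, 0 ≤ f I ∧ f I ≤ 1) ∧
  ∃ c > (0:ℝ),
    (∀ n : ℕ, ∑ w : Fin n → A, f (List.ofFn w) = 1) ∧
    (∀ I J : List A, ∃ K : List A, K.length ≤ p ∧ c * (f I * f J) ≤ f (I ++ K ++ J)) ∧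
    (∀ I : List A, ∃ i j : A, c * f I ≤ f (i :: I) ∧ c * f I ≤ f (I ++ [j]))

/-- the class `Ω(A*, p)` -/
def OmegaS {A : Type} [Fintype A] (p : ℕ) (f : List A → ℝ) : Prop :=
  (∀ I, 0 ≤ f I ∧ f I ≤ 1) ∧
  ∃ c > (0:ℝ),
    (∀ n : ℕ, ∑ w : Fin n → A, f (List.ofFn w) = 1) ∧
    (∀ I J : List A, ∃ K : List A, K.length = p ∧ c * (f I * f J) ≤ f (I ++ K ++ J))

/-- `f_{m,n}(I)` -/
def fmn {A : Type} [Fintype A] (f : List A → ℝ) (m n : ℕ) (I : List A) : ℝ :=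
  ∑ u : Fin m → A, ∑ v : Fin n → A, f (List.ofFn u ++ I ++ List.ofFn v)

/-- `f*(I) = sup_{m,n} f_{m,n}(I)` -/
def fstar {A : Type} [Fintype A] (f : List A → ℝ) (I : List A) : ℝ :=
  ⨆ m : ℕ, ⨆ n : ℕ, fmn f m n I

/-- the class `D_w(X, p)` -/
def Dw {A : Type} (X : Set (ℕ → A)) (p : ℕ) (φ : List A → ℝ) : Prop :=
  (∀ I, Lang X I → 0 ≤ φ I) ∧ (∃ I, Lang X I ∧ I ≠ [] ∧ 0 < φ I) ∧
  ∃ c : ℝ, 0 < c ∧ c ≤ 1 ∧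
    (∀ I J : List A, Lang X (I ++ J) → φ (I ++ J) ≤ c⁻¹ * φ I * φ J) ∧
    (∀ I J : List A, Lang X I → Lang X J →
      ∃ K : List A, K.length ≤ p ∧ Lang X (I ++ K ++ J) ∧
        c * (φ I * φ J) ≤ φ (I ++ K ++ J))

/-- the class `D(X, p)` -/
def Ds {A : Type} (X : Set (ℕ → A)) (p : ℕ) (φ : List A → ℝ) : Prop :=
  (∀ I, Lang X I → 0 ≤ φ I) ∧ (∃ I, Lang X I ∧ I ≠ [] ∧ 0 < φ I) ∧
  ∃ c : ℝ, 0 < c ∧ c ≤ 1 ∧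
    (∀ I J : List A, Lang X (I ++ J) → φ (I ++ J) ≤ c⁻¹ * φ I * φ J) ∧
    (∀ I J : List A, Lang X I → Lang X J →
      ∃ K : List A, K.length = p ∧ Lang X (I ++ K ++ J) ∧
        c * (φ I * φ J) ≤ φ (I ++ K ++ J))

end

noncomputable section

/-- iterated one-block maps along a chain of alphabets: `tauFrom π j i : B j → B (j+i)` -/
def tauFrom {B : ℕ → Type} (π : ∀ i, B i → B (i+1)) (j : ℕ) : (i : ℕ) → B j → B (j + i)
  | 0 => id
  | (i+1) => fun a => π (j + i) (tauFrom π j i a)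

/-- weighted pressure value along a chain starting at index `j`, with `k` weights `w 0, …, w (k-1)` -/
def wValGen {B : ℕ → Type} [∀ i, Fintype (B i)] [∀ i, MeasurableSpace (B i)]
    (π : ∀ i, B i → B (i+1)) (X : ∀ i, Set (ℕ → B i)) (j k : ℕ) (w : ℕ → ℝ)
    (φ : ℕ → (ℕ → B j) → ℝ) (μ : ProbabilityMeasure (ℕ → B j)) : EReal :=
  PhiStar (μ : Measure (ℕ → B j)) φ +
    ((∑ i ∈ Finset.range k, w i *
      ent (X (j + i)) ((μ : Measure (ℕ → B j)).map (blockMap (tauFrom π j i))) : ℝ) : EReal)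

/-- weighted equilibrium states along a chain -/
def wEqSetGen {B : ℕ → Type} [∀ i, Fintype (B i)] [∀ i, MeasurableSpace (B i)]
    (π : ∀ i, B i → B (i+1)) (X : ∀ i, Set (ℕ → B i)) (j k : ℕ) (w : ℕ → ℝ)
    (φ : ℕ → (ℕ → B j) → ℝ) : Set (ProbabilityMeasure (ℕ → B j)) :=
  {μ | μ ∈ MInv (X j) ∧
    wValGen π X j k w φ μ = ⨆ η ∈ MInv (X j), wValGen π X j k w φ η}

end

namespace WES

lemma gibbs_term {p q : ℝ} (hp : 0 ≤ p) (hq : 0 ≤ q) (hpq : 0 < p → 0 < q) :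
    Real.negMulLog p + p * Real.log q ≤ q - p := by
  rcases hp.eq_or_lt with h | h
  · subst h; simpa using hq
  · have hq' := hpq h
    have h1 := Real.log_le_sub_one_of_pos (div_pos hq' h)
    rw [Real.log_div hq'.ne' h.ne'] at h1
    have h2 : p * (Real.log q - Real.log p) ≤ p * (q / p - 1) :=
      mul_le_mul_of_nonneg_left h1 hp
    have h3 : p * (q / p - 1) = q - p := by field_simp
    rw [h3] at h2
    unfold Real.negMulLog
    linarith

lemma gibbs {ι : Type*} [Fintype ι] (p q : ι → ℝ) (hp : ∀ i, 0 ≤ p i) (hq : ∀ i, 0 ≤ q i)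
    (hpq : ∀ i, 0 < p i → 0 < q i) (hs : ∑ i, q i ≤ ∑ i, p i) :
    ∑ i, (Real.negMulLog (p i) + p i * Real.log (q i)) ≤ 0 := by
  calc ∑ i, (Real.negMulLog (p i) + p i * Real.log (q i)) ≤ ∑ i, (q i - p i) :=
        Finset.sum_le_sum fun i _ => gibbs_term (hp i) (hq i) (hpq i)
    _ = ∑ i, q i - ∑ i, p i := by rw [Finset.sum_sub_distrib]
    _ ≤ 0 := by linarith

lemma joint_entropy {α β : Type*} [Fintype α] [Fintype β] (r : α → β → ℝ)
    (hr : ∀ a b, 0 ≤ r a b) (h1 : ∑ a, ∑ b, r a b = 1) :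
    ∑ a, ∑ b, Real.negMulLog (r a b) ≤
      ∑ a, Real.negMulLog (∑ b, r a b) + ∑ b, Real.negMulLog (∑ a, r a b) := by
  set x : α → ℝ := fun a => ∑ b, r a b with hx
  set y : β → ℝ := fun b => ∑ a, r a b with hy
  have hx0 : ∀ a, 0 ≤ x a := fun a => Finset.sum_nonneg fun b _ => hr a b
  have hy0 : ∀ b, 0 ≤ y b := fun b => Finset.sum_nonneg fun a _ => hr a b
  have hxp : ∀ a b, 0 < r a b → 0 < x a := fun a b h =>
    h.trans_le (Finset.single_le_sum (f := fun b => r a b) (fun b _ => hr a b) (Finset.mem_univ b))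
  have hyp : ∀ a b, 0 < r a b → 0 < y b := fun a b h =>
    h.trans_le (Finset.single_le_sum (f := fun a => r a b) (fun a _ => hr a b) (Finset.mem_univ a))
  have hy1 : ∑ b, y b = 1 := by rw [hy, Finset.sum_comm]; exact h1
  have g := gibbs (ι := α × β) (fun z => r z.1 z.2) (fun z => x z.1 * y z.2)
    (fun z => hr _ _) (fun z => mul_nonneg (hx0 _) (hy0 _))
    (fun z h => mul_pos (hxp _ _ h) (hyp _ _ h)) (by
      rw [Fintype.sum_prod_type, Fintype.sum_prod_type]
      simp only [← Finset.mul_sum, hy1, mul_one]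
      exact le_of_eq rfl)
  rw [Fintype.sum_prod_type] at g
  have e : ∀ a b, Real.negMulLog (r a b) + r a b * Real.log (x a * y b) =
      Real.negMulLog (r a b) + r a b * Real.log (x a) + r a b * Real.log (y b) := by
    intro a b
    rcases (hr a b).eq_or_lt with h | h
    · simp [← h]
    · rw [Real.log_mul (hxp a b h).ne' (hyp a b h).ne']; ring
  simp only [e, Finset.sum_add_distrib] at g
  have e1 : ∑ a, ∑ b, r a b * Real.log (x a) = - ∑ a, Real.negMulLog (x a) := by
    rw [← Finset.sum_neg_distrib]
    refine Finset.sum_congr rfl fun a _ => ?_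
    rw [← Finset.sum_mul, Real.negMulLog]; simp [hx]
  have e2 : ∑ a, ∑ b, r a b * Real.log (y b) = - ∑ b, Real.negMulLog (y b) := by
    rw [← Finset.sum_neg_distrib, Finset.sum_comm]
    refine Finset.sum_congr rfl fun a _ => ?_
    rw [← Finset.sum_mul, Real.negMulLog]; simp [hy]
  rw [e1, e2] at g
  linarith

/-- upper bound: conditional Gibbs inequality -/
lemma cond_gibbs {W J : Type*} [Fintype W] [Fintype J] [DecidableEq J] (f : W → J) (p φ : W → ℝ)
    (hp : ∀ w, 0 ≤ p w) (hφ : ∀ w, 0 ≤ φ w) (hpφ : ∀ w, 0 < p w → 0 < φ w)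
    (ν ψ : J → ℝ) (hν : ∀ j, ν j = ∑ w, if f w = j then p w else 0)
    (hψ : ∀ j, ψ j = ∑ w, if f w = j then φ w else 0) :
    ∑ w, (Real.negMulLog (p w) + p w * Real.log (φ w)) ≤
      ∑ j, (Real.negMulLog (ν j) + ν j * Real.log (ψ j)) := by
  have hν0 : ∀ j, 0 ≤ ν j := fun j => by
    rw [hν]; exact Finset.sum_nonneg fun w _ => by split_ifs <;> simp [hp]
  have hψ0 : ∀ j, 0 ≤ ψ j := fun j => by
    rw [hψ]; exact Finset.sum_nonneg fun w _ => by split_ifs <;> simp [hφ]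
  have hpν : ∀ w, p w ≤ ν (f w) := fun w => by
    rw [hν]
    refine le_trans (by simp) (Finset.single_le_sum (f := fun v => if f v = f w then p v else 0)
      (fun v _ => by split_ifs <;> simp [hp]) (Finset.mem_univ w))
  have hφψ : ∀ w, φ w ≤ ψ (f w) := fun w => by
    rw [hψ]
    refine le_trans (by simp) (Finset.single_le_sum (f := fun v => if f v = f w then φ v else 0)
      (fun v _ => by split_ifs <;> simp [hφ]) (Finset.mem_univ w))
  have fib : ∀ g : W → ℝ, ∑ w, g w = ∑ j, ∑ w, if f w = j then g w else 0 := by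
    intro g; rw [Finset.sum_comm]; simp
  have fib2 : ∀ g : J → ℝ, ∑ w, p w * g (f w) = ∑ j, ν j * g j := by
    intro g
    rw [fib]
    refine Finset.sum_congr rfl fun j _ => ?_
    rw [hν, Finset.sum_mul]
    refine Finset.sum_congr rfl fun w _ => ?_
    split_ifs with h
    · rw [h]
    · simp
  have g := gibbs p (fun w => φ w * (ν (f w) / ψ (f w))) hp
    (fun w => mul_nonneg (hφ _) (div_nonneg (hν0 _) (hψ0 _)))
    (fun w h => mul_pos (hpφ w h) (div_pos (h.trans_le (hpν w)) ((hpφ w h).trans_le (hφψ w)))) (by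
      rw [fib, fib p]
      refine Finset.sum_le_sum fun j _ => ?_
      rw [← hν]
      have : ∑ w, (if f w = j then φ w * (ν (f w) / ψ (f w)) else 0) = ψ j * (ν j / ψ j) := by
        rw [hψ j, Finset.sum_mul]
        refine Finset.sum_congr rfl fun w _ => ?_
        split_ifs with h
        · rw [h, hψ j]
        · simp
      rw [this]
      by_cases h : ψ j = 0
      · simp [h, hν0]
      · rw [mul_div_cancel₀ _ h])
  have e : ∀ w, Real.negMulLog (p w) + p w * Real.log (φ w * (ν (f w) / ψ (f w))) =
      (Real.negMulLog (p w) + p w * Real.log (φ w)) -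
        p w * (fun j => Real.log (ψ j) - Real.log (ν j)) (f w) := by
    intro w
    rcases (hp w).eq_or_lt with h | h
    · simp [← h]
    · have h1 := hpφ w h
      have h2 := h.trans_le (hpν w)
      have h3 := h1.trans_le (hφψ w)
      rw [Real.log_mul h1.ne' (div_pos h2 h3).ne', Real.log_div h2.ne' h3.ne']
      simp only []
      ring
  simp only [e] at g
  rw [Finset.sum_sub_distrib, fib2 (fun j => Real.log (ψ j) - Real.log (ν j))] at g
  have e3 : ∑ j, (Real.negMulLog (ν j) + ν j * Real.log (ψ j)) =
      ∑ j, ν j * (Real.log (ψ j) - Real.log (ν j)) := by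
    refine Finset.sum_congr rfl fun j _ => ?_
    simp only [Real.negMulLog]; ring
  rw [e3]
  linarith

/-- equality case -/
lemma cond_gibbs_eq {W J : Type*} [Fintype W] [Fintype J] [DecidableEq J] (f : W → J) (p φ : W → ℝ)
    (hφ : ∀ w, 0 ≤ φ w)
    (ν ψ : J → ℝ) (hν0 : ∀ j, 0 ≤ ν j)
    (hψ : ∀ j, ψ j = ∑ w, if f w = j then φ w else 0)
    (hpos : ∀ j, 0 < ν j → 0 < ψ j) (hpd : ∀ w, p w = φ w * (ν (f w) / ψ (f w))) :
    (∀ j, ν j = ∑ w, if f w = j then p w else 0) ∧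
    ∑ w, (Real.negMulLog (p w) + p w * Real.log (φ w)) =
      ∑ j, (Real.negMulLog (ν j) + ν j * Real.log (ψ j)) := by
  have hν : ∀ j, ν j = ∑ w, if f w = j then p w else 0 := by
    intro j
    have : ∑ w, (if f w = j then p w else 0) = ψ j * (ν j / ψ j) := by
      rw [hψ j, Finset.sum_mul]
      refine Finset.sum_congr rfl fun w _ => ?_
      split_ifs with h
      · rw [hpd, h, hψ j]
      · simp
    rw [this]
    rcases (hν0 j).eq_or_lt with h | h
    · simp [← h]
    · rw [mul_div_cancel₀ _ (hpos j h).ne']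
  refine ⟨hν, ?_⟩
  have fib : ∀ g : W → ℝ, ∑ w, g w = ∑ j, ∑ w, if f w = j then g w else 0 := by
    intro g; rw [Finset.sum_comm]; simp
  have fib2 : ∀ g : J → ℝ, ∑ w, p w * g (f w) = ∑ j, ν j * g j := by
    intro g
    rw [fib]
    refine Finset.sum_congr rfl fun j _ => ?_
    rw [hν, Finset.sum_mul]
    refine Finset.sum_congr rfl fun w _ => ?_
    split_ifs with h
    · rw [h]
    · simp
  have e3 : ∑ j, (Real.negMulLog (ν j) + ν j * Real.log (ψ j)) =
      ∑ j, ν j * (fun j => Real.log (ψ j) - Real.log (ν j)) j := by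
    refine Finset.sum_congr rfl fun j _ => ?_
    simp only [Real.negMulLog]; ring
  rw [e3, ← fib2]
  refine Finset.sum_congr rfl fun w _ => ?_
  rcases (hφ w).eq_or_lt with h | h
  · simp [hpd, ← h]
  rcases (hν0 (f w)).eq_or_lt with h' | h'
  · simp [hpd, ← h']
  have h3 := hpos _ h'
  rw [Real.negMulLog]
  have : Real.log (p w) = Real.log (φ w) + (Real.log (ν (f w)) - Real.log (ψ (f w))) := by
    rw [hpd, Real.log_mul h.ne' (div_pos h' h3).ne', Real.log_div h'.ne' h3.ne']
  rw [this]
  ring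

lemma sum_range_block (g : ℕ → ℝ) (m r : ℕ) :
    ∑ k ∈ Finset.range m, ∑ j ∈ Finset.range r, g (k + j * m) =
      ∑ i ∈ Finset.range (r * m), g i := by
  induction r with
  | zero => simp
  | succ r ih =>
    simp only [Finset.sum_range_succ, Finset.sum_add_distrib, ih]
    rw [Nat.succ_mul, Finset.sum_range_add]
    congr 1
    exact Finset.sum_congr rfl fun k _ => by rw [add_comm]

lemma block_bound (E : ℕ → ℕ → ℝ) (N m : ℕ) (hm : 1 ≤ m) (hN : 2 * m ≤ N) (C D : ℝ)
    (hC : 0 ≤ C)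
    (hsub : ∀ i a b, i + a + b ≤ N → E i (a + b) ≤ E i a + E (i + a) b + C)
    (hbd : ∀ i l, l ≤ 2 * m → |E i l| ≤ D) :
    m * E 0 N ≤ ∑ i ∈ Finset.range N, E i m + N * C + m * (4 * D + 2 * C) := by
  obtain ⟨r, hr⟩ : ∃ r, N / m = r + 1 := ⟨N / m - 1, by
    have : 2 ≤ N / m := (Nat.le_div_iff_mul_le (by omega)).2 hN
    omega⟩
  have h1 : (r + 1) * m ≤ N := by rw [← hr]; exact Nat.div_mul_le_self N m
  have h2 : N < (r + 1) * m + m := by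
    rw [← hr]; have := Nat.lt_div_mul_add (a := N) (show 0 < m by omega); exact this
  have hD : 0 ≤ D := (abs_nonneg _).trans (hbd 0 0 (by omega))
  have step : ∀ k s t, k + s * m + t ≤ N →
      E k (s * m + t) ≤ ∑ j ∈ Finset.range s, E (k + j * m) m + E (k + s * m) t + s * C := by
    intro k s
    induction s with
    | zero => intro t _; simp
    | succ s ih =>
      intro t ht
      have e : (s + 1) * m + t = s * m + (m + t) := by ring
      have e' : k + (s + 1) * m = k + s * m + m := by ring
      have a1 := ih (m + t) (by rw [e'] at ht; omega)
      have a2 := hsub (k + s * m) m t (by rw [e'] at ht; omega)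
      rw [e, e', Finset.sum_range_succ]
      push_cast
      linarith
  have key : ∀ k ∈ Finset.range m, E 0 N ≤
      ∑ j ∈ Finset.range r, E (k + j * m) m + (2 * D + C + r * C) := by
    intro k hk
    rw [Finset.mem_range] at hk
    rw [Nat.succ_mul] at h1 h2
    obtain ⟨t, ht⟩ : ∃ t, N = k + (r * m + t) := ⟨N - (k + r * m), by omega⟩
    have a1 := hsub 0 k (r * m + t) (by omega)
    have a2 := step k r t (by omega)
    have a3 := (abs_le.1 (hbd 0 k (by omega))).2
    have a4 := (abs_le.1 (hbd (k + r * m) t (by omega))).2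
    rw [← ht, zero_add] at a1
    linarith
  have tot := Finset.sum_le_sum key
  rw [Finset.sum_const, Finset.card_range, nsmul_eq_mul, Finset.sum_add_distrib,
    sum_range_block (fun i => E i m), Finset.sum_const, Finset.card_range, nsmul_eq_mul] at tot
  obtain ⟨t, ht⟩ : ∃ t, N = r * m + t := ⟨N - r * m, by rw [Nat.succ_mul] at h1; omega⟩
  have ht2 : t ≤ 2 * m := by rw [Nat.succ_mul] at h2; omega
  have rest : -(2 * m * D) ≤ ∑ i ∈ Finset.range t, E (r * m + i) m := by
    have : ∑ i ∈ Finset.range t, (-D) ≤ ∑ i ∈ Finset.range t, E (r * m + i) m :=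
      Finset.sum_le_sum fun i _ => (abs_le.1 (hbd _ m (by omega))).1
    rw [Finset.sum_const, Finset.card_range, nsmul_eq_mul] at this
    have h3 : (t : ℝ) ≤ 2 * m := by exact_mod_cast ht2
    nlinarith
  have hsum : ∑ i ∈ Finset.range N, E i m =
      ∑ i ∈ Finset.range (r * m), E i m + ∑ i ∈ Finset.range t, E (r * m + i) m := by
    rw [ht, Finset.sum_range_add]
  have h4 : (m : ℝ) * (r * C) ≤ N * C := by
    have : (r : ℝ) * m ≤ N := by exact_mod_cast (show r * m ≤ N by omega)
    nlinarith
  have h5 : 0 ≤ (m : ℝ) * C := by positivity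
  rw [hsum]
  linarith

lemma liminf_transfer (u v : ℕ → EReal) (d : ℕ → ℝ) (d0 : ℝ) (hd : Tendsto d atTop (𝓝 d0))
    (h : ∀ a : ℝ, (a : EReal) < liminf u atTop → ∀ᶠ n in atTop, ((a + d n : ℝ) : EReal) ≤ v n) :
    liminf u atTop + (d0 : EReal) ≤ liminf v atTop := by
  refine le_of_forall_lt fun c hc => ?_
  obtain ⟨q, hq1, hq2⟩ := EReal.lt_iff_exists_real_btwn.1 hc
  have h1 : ((q - d0 : ℝ) : EReal) < liminf u atTop := by
    rw [EReal.coe_sub]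
    exact EReal.sub_lt_of_lt_add hq2
  obtain ⟨a, ha1, ha2⟩ := EReal.lt_iff_exists_real_btwn.1 h1
  refine hq1.trans_le (le_liminf_of_le (by isBoundedDefault) ?_)
  have h3 : q - d0 < a := by exact_mod_cast ha1
  have h4 := hd.eventually (lt_mem_nhds (show q - a < d0 by linarith))
  filter_upwards [h a ha2, h4] with n h5 h6
  refine le_trans ?_ h5
  exact_mod_cast (by linarith)

end WES

set_option linter.unusedSectionVars false

namespace WES

/-- window `x_i … x_{i+n-1}` -/
def win {A : Type} (i n : ℕ) (x : ℕ → A) : Fin n → A := fun j => x (i + j)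

/-- probability of seeing `w` in the window -/
noncomputable def PW {A : Type} [MeasurableSpace A] (η : Measure (ℕ → A)) (i n : ℕ)
    (w : Fin n → A) : ℝ := η.real (win i n ⁻¹' {w})

/-- entropy plus energy of a window -/
noncomputable def EW {A : Type} [Fintype A] [MeasurableSpace A] (η : Measure (ℕ → A))
    (f : List A → ℝ) (i n : ℕ) : ℝ :=
  ∑ w : Fin n → A, (Real.negMulLog (PW η i n w) + PW η i n w * f (List.ofFn w))

section
variable {A : Type} [Fintype A] [TopologicalSpace A] [DiscreteTopology A] [MeasurableSpace A]
  [BorelSpace A]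

lemma continuous_win (i n : ℕ) : Continuous (win (A := A) i n) :=
  continuous_pi fun j => continuous_apply (i + (j : ℕ))

lemma measurable_win (i n : ℕ) : Measurable (win (A := A) i n) :=
  measurable_pi_iff.2 fun j => measurable_pi_apply (i + (j : ℕ))

lemma measurable_shift : Measurable (shiftMap (A := A)) :=
  measurable_pi_iff.2 fun j => measurable_pi_apply (j + 1)

lemma continuous_shift : Continuous (shiftMap (A := A)) :=
  continuous_pi fun j => continuous_apply (j + 1)

lemma shift_iter (j : ℕ) (x : ℕ → A) (k : ℕ) : shiftMap^[j] x k = x (j + k) := by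
  induction j generalizing x with
  | zero => simp
  | succ j ih => rw [Function.iterate_succ_apply, ih, shiftMap]; congr 1; omega

lemma win_shift_iter (i j n : ℕ) (x : ℕ → A) : win i n (shiftMap^[j] x) = win (j + i) n x := by
  funext k; simp only [win, shift_iter]; congr 1; omega

lemma PW_nonneg (η : Measure (ℕ → A)) (i n : ℕ) (w : Fin n → A) : 0 ≤ PW η i n w :=
  measureReal_nonneg

lemma PW_le_one (η : Measure (ℕ → A)) [IsProbabilityMeasure η] (i n : ℕ) (w : Fin n → A) :
    PW η i n w ≤ 1 := measureReal_le_one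

lemma marg (η : Measure (ℕ → A)) [IsProbabilityMeasure η] (i n : ℕ) {γ : Type*}
    [DecidableEq γ]     (g : (Fin n → A) → γ) (c : γ) :
    η.real ((fun x => g (win i n x)) ⁻¹' {c}) = ∑ w, if g w = c then PW η i n w else 0 := by
  rw [← Finset.sum_filter]
  simp only [PW]
  rw [sum_measureReal_preimage_singleton _
    (fun w _ => measurable_win i n (measurableSet_singleton w))]
  congr 1
  ext x
  simp

lemma sum_PW (η : Measure (ℕ → A)) [IsProbabilityMeasure η] (i n : ℕ) :
    ∑ w, PW η i n w = 1 := by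
  have := marg η i n (fun _ => ()) ()
  simp at this
  exact this.symm

lemma PW_left (η : Measure (ℕ → A)) [IsProbabilityMeasure η] (i a b : ℕ) (u : Fin a → A) :
    PW η i a u = ∑ v, PW η i (a + b) (Fin.append u v) := by
  have h := marg η i (a + b) (fun w => fun k : Fin a => w (Fin.castAdd b k)) u
  have e : (fun x : ℕ → A => fun k : Fin a => win i (a + b) x (Fin.castAdd b k)) = win i a := by
    funext x k; simp [win]
  simp only [e] at h
  rw [PW, h, ← (Fin.appendEquiv a b).sum_comp, Fintype.sum_prod_type]
  simp [Finset.sum_ite_irrel, Fin.appendEquiv]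

lemma PW_right (η : Measure (ℕ → A)) [IsProbabilityMeasure η] (i a b : ℕ) (v : Fin b → A) :
    PW η (i + a) b v = ∑ u, PW η i (a + b) (Fin.append u v) := by
  have h := marg η i (a + b) (fun w => fun k : Fin b => w (Fin.natAdd a k)) v
  have e : (fun x : ℕ → A => fun k : Fin b => win i (a + b) x (Fin.natAdd a k)) =
      win (i + a) b := by
    funext x k; simp [win, add_assoc]
  simp only [e] at h
  rw [PW, h, ← (Fin.appendEquiv a b).sum_comp, Fintype.sum_prod_type]
  simp [Fin.appendEquiv]

lemma EW_subadd (η : Measure (ℕ → A)) [IsProbabilityMeasure η] (f : List A → ℝ) (i a b : ℕ)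
    (C : ℝ)
    (hf : ∀ (u : Fin a → A) (v : Fin b → A), 0 < PW η i (a + b) (Fin.append u v) →
      f (List.ofFn u ++ List.ofFn v) ≤ f (List.ofFn u) + f (List.ofFn v) + C) :
    EW η f i (a + b) ≤ EW η f i a + EW η f (i + a) b + C := by
  set r : (Fin a → A) → (Fin b → A) → ℝ := fun u v => PW η i (a + b) (Fin.append u v) with hr
  have hr0 : ∀ u v, 0 ≤ r u v := fun u v => PW_nonneg _ _ _ _
  have tot : ∀ g : (Fin (a + b) → A) → ℝ, ∑ w, g w = ∑ u, ∑ v, g (Fin.append u v) := by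
    intro g
    rw [← (Fin.appendEquiv a b).sum_comp, Fintype.sum_prod_type]
    simp [Fin.appendEquiv]
  have h1 : ∑ u, ∑ v, r u v = 1 := by rw [← tot, sum_PW]
  have hj := joint_entropy r hr0 h1
  have hl : ∑ u, ∑ v, r u v * f (List.ofFn (Fin.append u v)) ≤
      ∑ u, ∑ v, r u v * (f (List.ofFn u) + f (List.ofFn v) + C) := by
    refine Finset.sum_le_sum fun u _ => Finset.sum_le_sum fun v _ => ?_
    rcases (hr0 u v).eq_or_lt with h | h
    · simp [← h]
    · rw [List.ofFn_fin_append]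
      exact mul_le_mul_of_nonneg_left (hf u v h) h.le
  have e1 : ∑ u, ∑ v, r u v * (f (List.ofFn u) + f (List.ofFn v) + C) =
      ∑ u, PW η i a u * f (List.ofFn u) + ∑ v, PW η (i + a) b v * f (List.ofFn v) + C := by
    simp only [mul_add, Finset.sum_add_distrib]
    congr 1
    · congr 1
      · refine Finset.sum_congr rfl fun u _ => ?_
        rw [PW_left η i a b, Finset.sum_mul]
      · rw [Finset.sum_comm]
        refine Finset.sum_congr rfl fun u _ => ?_
        rw [PW_right η i a b, Finset.sum_mul]
    · simp only [← Finset.sum_mul, h1, one_mul]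
  simp only [EW, Finset.sum_add_distrib]
  rw [tot (fun w => Real.negMulLog (PW η i (a + b) w)),
    tot (fun w => PW η i (a + b) w * f (List.ofFn w))]
  simp only [hr, ← PW_left, ← PW_right] at hj hl e1
  linarith

lemma negMulLog_abs_le {p : ℝ} (h0 : 0 ≤ p) (h1 : p ≤ 1) : |Real.negMulLog p| ≤ 1 := by
  rw [abs_of_nonneg (Real.negMulLog_nonneg h0 h1)]
  linarith [Real.negMulLog_le_one_sub_self h0]

lemma EW_abs_le (η : Measure (ℕ → A)) [IsProbabilityMeasure η] (f : List A → ℝ) (i n : ℕ) :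
    |EW η f i n| ≤ ∑ w : Fin n → A, (1 + |f (List.ofFn w)|) := by
  refine (Finset.abs_sum_le_sum_abs _ _).trans (Finset.sum_le_sum fun w _ => ?_)
  refine (abs_add_le _ _).trans (add_le_add
    (negMulLog_abs_le (PW_nonneg _ _ _ _) (PW_le_one _ _ _ _)) ?_)
  rw [abs_mul, abs_of_nonneg (PW_nonneg _ _ _ _)]
  exact mul_le_of_le_one_left (abs_nonneg _) (PW_le_one _ _ _ _)

lemma EW_bound (f : List A → ℝ) (m : ℕ) : ∃ D, ∀ (η : Measure (ℕ → A)), IsProbabilityMeasure η →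
    ∀ i l, l ≤ m → |EW η f i l| ≤ D := by
  refine ⟨∑ l ∈ Finset.range (m + 1), ∑ w : Fin l → A, (1 + |f (List.ofFn w)|), ?_⟩
  intro η _ i l hl
  refine (EW_abs_le η f i l).trans
    (Finset.single_le_sum (f := fun l => ∑ w : Fin l → A, (1 + |f (List.ofFn w)|))
      (fun l _ => ?_) (Finset.mem_range.2 (by omega)))
  exact Finset.sum_nonneg fun w _ => by positivity

lemma cyl_ofFn (n : ℕ) (w : Fin n → A) : cyl (List.ofFn w) = win 0 n ⁻¹' {w} := by
  ext x
  simp only [cyl, Set.mem_ofPred_eq, Set.mem_preimage, Set.mem_singleton_iff, funext_iff, win,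
    zero_add]
  constructor
  · intro h k
    have := h ⟨k, by simp⟩
    simpa using this
  · intro h k
    have := h ⟨k, by simpa using k.2⟩
    simpa using this

lemma mw_eq (X : Set (ℕ → A)) (hXm : MeasurableSet X) (μ : Measure (ℕ → A))
    [IsProbabilityMeasure μ] (hX : μ X = 1) (n : ℕ) (w : Fin n → A) :
    mw X μ (List.ofFn w) = PW μ 0 n w := by
  rw [mw, PW, cyl_ofFn, Measure.real]
  congr 1
  have : μ Xᶜ = 0 := (prob_compl_eq_zero_iff hXm).2 hX
  exact measure_inter_conull this

lemma Hblock_eq (X : Set (ℕ → A)) (hXm : MeasurableSet X) (μ : Measure (ℕ → A))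
    [IsProbabilityMeasure μ] (hX : μ X = 1) (n : ℕ) : Hblock X μ n = EW μ (fun _ => 0) 0 n := by
  simp [Hblock, EW, mw_eq X hXm μ hX, Real.negMulLog]

lemma PW_shift (μ : Measure (ℕ → A)) (i j n : ℕ) (w : Fin n → A) :
    PW (μ.map shiftMap^[j]) i n w = PW μ (j + i) n w := by
  rw [PW, PW, Measure.real, Measure.real,
    Measure.map_apply (measurable_shift.iterate j) (measurable_win i n (measurableSet_singleton w))]
  congr 2
  ext x
  simp [win_shift_iter]

lemma map_iter (μ : Measure (ℕ → A)) (h : μ.map shiftMap = μ) (j : ℕ) :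
    μ.map shiftMap^[j] = μ := by
  induction j with
  | zero => simp
  | succ j ih =>
    rw [Function.iterate_succ, ← Measure.map_map (measurable_shift.iterate j) measurable_shift,
      h, ih]

lemma PW_inv (μ : Measure (ℕ → A)) (h : μ.map shiftMap = μ) (i n : ℕ) (w : Fin n → A) :
    PW μ i n w = PW μ 0 n w := by
  conv_rhs => rw [← map_iter μ h i, PW_shift]
  simp

lemma EW_inv (μ : Measure (ℕ → A)) (h : μ.map shiftMap = μ) (f : List A → ℝ) (i n : ℕ) :
    EW μ f i n = EW μ f 0 n := by
  simp only [EW, PW_inv μ h i]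

lemma ent_tendsto (X : Set (ℕ → A)) (hXm : MeasurableSet X) (μ : Measure (ℕ → A))
    [IsProbabilityMeasure μ] (hX : μ X = 1) (h : μ.map shiftMap = μ) :
    Tendsto (fun n : ℕ => EW μ (fun _ => 0) 0 n / n) atTop (𝓝 (ent X μ)) := by
  have hs : Subadditive (fun n => EW μ (fun _ => 0) 0 n) := by
    intro a b
    have := EW_subadd μ (fun _ => 0) 0 a b 0 (by simp)
    rw [EW_inv μ h _ (0 + a)] at this
    simpa using this
  have ht := hs.tendsto_lim ⟨0, by
    rintro _ ⟨n, rfl⟩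
    refine div_nonneg (Finset.sum_nonneg fun w _ => ?_) (Nat.cast_nonneg _)
    simpa using Real.negMulLog_nonneg (PW_nonneg _ _ _ _) (PW_le_one _ _ _ _)⟩
  have : ent X μ = hs.lim := by
    rw [ent]
    simp only [Hblock_eq X hXm μ hX]
    exact ht.liminf_eq
  rw [this]; exact ht

lemma lintegral_win (μ : Measure (ℕ → A)) (i n : ℕ) (F : (Fin n → A) → ℝ≥0∞) :
    ∫⁻ x, F (win i n x) ∂μ = ∑ w, F w * μ (win i n ⁻¹' {w}) := by
  rw [← lintegral_map (f := F) (measurable_of_finite F) (measurable_win i n), lintegral_fintype]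
  refine Finset.sum_congr rfl fun w _ => ?_
  rw [Measure.map_apply (measurable_win i n) (measurableSet_singleton w)]

lemma wordOf_eq (x : ℕ → A) (n : ℕ) : wordOf x n = List.ofFn (win 0 n x) := by
  rw [wordOf]; congr 1; funext i; simp [win]

lemma intlog_bot (μ : Measure (ℕ → A)) [IsProbabilityMeasure μ] (φ : List A → ℝ) (n : ℕ)
    (w : Fin n → A) (hw : 0 < PW μ 0 n w) (hφ : φ (List.ofFn w) ≤ 0) :
    intlog μ (genPot φ n) = ⊥ := by
  have : ∫⁻ x, (if genPot φ n x ≤ 0 then (⊤ : ℝ≥0∞)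
      else ENNReal.ofReal (-Real.log (genPot φ n x))) ∂μ = ⊤ := by
    simp only [genPot, wordOf_eq]
    rw [lintegral_win μ 0 n (fun w => if φ (List.ofFn w) ≤ 0 then (⊤ : ℝ≥0∞)
      else ENNReal.ofReal (-Real.log (φ (List.ofFn w))))]
    refine ENNReal.sum_eq_top.2 ⟨w, Finset.mem_univ _, ?_⟩
    rw [if_pos hφ]
    refine ENNReal.top_mul ?_
    intro h0
    rw [PW, Measure.real, h0] at hw
    simp at hw
  rw [intlog, this]
  simp

lemma intlog_real (μ : Measure (ℕ → A)) [IsProbabilityMeasure μ] (φ : List A → ℝ) (n : ℕ)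
    (hφ : ∀ w : Fin n → A, 0 < PW μ 0 n w → 0 < φ (List.ofFn w)) :
    intlog μ (genPot φ n) =
      ((∑ w, PW μ 0 n w * Real.log (φ (List.ofFn w)) : ℝ) : EReal) := by
  have e1 : ∫⁻ x, ENNReal.ofReal (Real.log (genPot φ n x)) ∂μ =
      ENNReal.ofReal (∑ w, PW μ 0 n w * max (Real.log (φ (List.ofFn w))) 0) := by
    simp only [genPot, wordOf_eq]
    rw [lintegral_win μ 0 n (fun w => ENNReal.ofReal (Real.log (φ (List.ofFn w)))),
      ENNReal.ofReal_sum_of_nonneg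
        (fun w _ => mul_nonneg (PW_nonneg _ _ _ _) (le_max_right _ _))]
    refine Finset.sum_congr rfl fun w _ => ?_
    rw [ENNReal.ofReal_mul (PW_nonneg _ _ _ _), PW, ofReal_measureReal, mul_comm]
    congr 1
    simp [ENNReal.ofReal_max]
  have e2 : ∫⁻ x, (if genPot φ n x ≤ 0 then (⊤ : ℝ≥0∞)
      else ENNReal.ofReal (-Real.log (genPot φ n x))) ∂μ =
      ENNReal.ofReal (∑ w, PW μ 0 n w * max (-Real.log (φ (List.ofFn w))) 0) := by
    simp only [genPot, wordOf_eq]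
    rw [lintegral_win μ 0 n (fun w => if φ (List.ofFn w) ≤ 0 then (⊤ : ℝ≥0∞)
      else ENNReal.ofReal (-Real.log (φ (List.ofFn w)))),
      ENNReal.ofReal_sum_of_nonneg
        (fun w _ => mul_nonneg (PW_nonneg _ _ _ _) (le_max_right _ _))]
    refine Finset.sum_congr rfl fun w _ => ?_
    rw [ENNReal.ofReal_mul (PW_nonneg _ _ _ _)]
    rcases (PW_nonneg μ 0 n w).eq_or_lt with h | h
    · have : μ (win 0 n ⁻¹' {w}) = 0 := by
        rw [PW, eq_comm, measureReal_eq_zero_iff] at h; exact h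
      simp [this, ← h]
    · rw [if_neg (not_le.2 (hφ w h)), PW, ofReal_measureReal, mul_comm]
      congr 1
      simp [ENNReal.ofReal_max]
  rw [intlog, e1, e2, EReal.coe_ennreal_ofReal, EReal.coe_ennreal_ofReal,
    max_eq_left (Finset.sum_nonneg fun w _ => mul_nonneg (PW_nonneg _ _ _ _) (le_max_right _ _)),
    max_eq_left (Finset.sum_nonneg fun w _ => mul_nonneg (PW_nonneg _ _ _ _) (le_max_right _ _)),
    ← EReal.coe_sub, ← Finset.sum_sub_distrib]
  congr 1
  refine Finset.sum_congr rfl fun w _ => ?_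
  rw [← mul_sub]
  congr 1
  rcases le_total (Real.log (φ (List.ofFn w))) 0 with h | h
  · rw [max_eq_right h, max_eq_left (by linarith)]; ring
  · rw [max_eq_left h, max_eq_right (by linarith)]; ring

lemma ext_PW (μ μ' : Measure (ℕ → A)) [IsProbabilityMeasure μ] [IsProbabilityMeasure μ']
    (h : ∀ n w, PW μ 0 n w = PW μ' 0 n w) : μ = μ' := by
  have hw : ∀ n, μ.map (win 0 n) = μ'.map (win 0 n) := by
    intro n
    refine Measure.ext_of_singleton fun w => ?_
    rw [Measure.map_apply (measurable_win 0 n) (measurableSet_singleton w),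
      Measure.map_apply (measurable_win 0 n) (measurableSet_singleton w)]
    have := h n w
    simp only [PW] at this
    rwa [measureReal_def, measureReal_def,
      ENNReal.toReal_eq_toReal_iff' (measure_ne_top _ _) (measure_ne_top _ _)] at this
  have hI : ∀ I : Finset ℕ, μ.map I.restrict = μ'.map I.restrict := by
    intro I
    let g : (Fin (I.sup id + 1) → A) → (I → A) :=
      fun w j => w ⟨j, Nat.lt_succ_of_le (Finset.le_sup (f := id) j.2)⟩
    have e : (I.restrict : (ℕ → A) → (I → A)) = g ∘ win 0 (I.sup id + 1) := by
      funext x j; simp [g, win]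
    rw [e, ← Measure.map_map (measurable_of_finite g) (measurable_win _ _),
      ← Measure.map_map (measurable_of_finite g) (measurable_win _ _), hw]
  have : ∀ I : Finset ℕ, IsFiniteMeasure (μ'.map (I.restrict : (ℕ → A) → (I → A))) :=
    fun I => inferInstance
  exact IsProjectiveLimit.unique (P := fun I : Finset ℕ => μ'.map I.restrict) hI (fun I => rfl)

end
end WES

set_option linter.unusedSectionVars false

namespace WES
section
variable {A B : Type}
    [Fintype A] [TopologicalSpace A] [DiscreteTopology A] [MeasurableSpace A] [BorelSpace A]
    [Fintype B] [TopologicalSpace B] [DiscreteTopology B] [MeasurableSpace B] [BorelSpace B]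

lemma lang_iff (X : Set (ℕ → A)) (n : ℕ) (w : Fin n → A) :
    Lang X (List.ofFn w) ↔ ∃ x ∈ X, win 0 n x = w := by
  rw [Lang, cyl_ofFn]
  constructor
  · rintro ⟨x, hx, hX⟩; exact ⟨x, hX, hx⟩
  · rintro ⟨x, hX, hx⟩; exact ⟨x, hx, hX⟩

lemma lang_win (X : Set (ℕ → A)) (x : ℕ → A) (hx : x ∈ X) (n : ℕ) :
    Lang X (List.ofFn (win 0 n x)) := (lang_iff X n _).2 ⟨x, hx, rfl⟩

lemma iter_mem (X : Set (ℕ → A)) (hX : IsSubshift X) (x : ℕ → A) (hx : x ∈ X) (j : ℕ) :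
    shiftMap^[j] x ∈ X := by
  induction j with
  | zero => exact hx
  | succ j ih => rw [Function.iterate_succ_apply']; exact hX.2.2 ⟨_, ih, rfl⟩

lemma lang_append (X : Set (ℕ → A)) (hX : IsSubshift X) (I J : List A) (h : Lang X (I ++ J)) :
    Lang X I ∧ Lang X J := by
  obtain ⟨u, hu⟩ : ∃ u : Fin I.length → A, I = List.ofFn u := ⟨I.get, by simp⟩
  obtain ⟨v, hv⟩ : ∃ v : Fin J.length → A, J = List.ofFn v := ⟨J.get, by simp⟩
  generalize I.length = a at u hu
  generalize J.length = b at v hv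
  subst hu hv
  rw [← List.ofFn_fin_append, lang_iff] at h
  obtain ⟨x, hx, hw⟩ := h
  constructor
  · refine (lang_iff X a u).2 ⟨x, hx, ?_⟩
    funext k
    have := congrFun hw (Fin.castAdd b k)
    simpa [win] using this
  · refine (lang_iff X b v).2 ⟨shiftMap^[a] x, iter_mem X hX x hx a, ?_⟩
    funext k
    have := congrFun hw (Fin.natAdd a k)
    simpa [win, shift_iter] using this

lemma psi_len (X : Set (ℕ → A)) (π : A → B) (φ : List A → ℝ) (n : ℕ) (J : List B)
    (h : J.length = n) : psiProj X π φ J = ∑ w : Fin n → A,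
      if Lang X (List.ofFn w) ∧ List.map π (List.ofFn w) = J then φ (List.ofFn w) else 0 := by
  subst h; rfl

lemma psi_submult (X : Set (ℕ → A)) (Y : Set (ℕ → B)) (hX : IsSubshift X) (π : A → B)
    (φ : List A → ℝ) (hφ : Submult X φ) : Submult Y (psiProj X π φ) := by
  obtain ⟨h0, h1, c, hc, h2⟩ := hφ
  refine ⟨fun J _ => Finset.sum_nonneg fun w _ => ?_, ?_, c, hc, fun I J _ => ?_⟩
  · split_ifs with h
    · exact h0 _ h.1
    · exact le_rfl
  · rw [psi_len X π φ 0 [] rfl]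
    have : Lang X ([] : List A) := by
      obtain ⟨x, hx⟩ := hX.1
      exact ⟨x, by simp [cyl], hx⟩
    simp [this, h1]
  · rw [psi_len X π φ (I.length + J.length) (I ++ J) (by simp), psiProj, psiProj,
      ← (Fin.appendEquiv _ _).sum_comp, Fintype.sum_prod_type, mul_assoc, Finset.sum_mul_sum,
      Finset.mul_sum]
    refine Finset.sum_le_sum fun u _ => ?_
    rw [Finset.mul_sum]
    refine Finset.sum_le_sum fun v _ => ?_
    have eap : List.ofFn ((Fin.appendEquiv I.length J.length) (u, v)) =
        List.ofFn u ++ List.ofFn v := List.ofFn_fin_append u v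
    rw [eap, List.map_append]
    have nn : ∀ (n : ℕ) (w : Fin n → A) (K : List B),
        0 ≤ if Lang X (List.ofFn w) ∧ List.map π (List.ofFn w) = K then φ (List.ofFn w) else 0 := by
      intro n w K
      split_ifs with h
      · exact h0 _ h.1
      · exact le_rfl
    split_ifs with h hu hv hv
    · rw [← mul_assoc]; exact h2 _ _ h.1
    · exact absurd ⟨(lang_append X hX _ _ h.1).2,
        (List.append_inj h.2 (by simp)).2⟩ hv
    · exact absurd ⟨(lang_append X hX _ _ h.1).1,
        (List.append_inj h.2 (by simp)).1⟩ hu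
    · exact absurd ⟨(lang_append X hX _ _ h.1).1,
        (List.append_inj h.2 (by simp)).1⟩ hu
    all_goals
      first
      | exact mul_nonneg (inv_nonneg.2 hc.le) (mul_nonneg (h0 _ (by tauto)) (h0 _ (by tauto)))
      | simp

lemma psi_ofFn (X : Set (ℕ → A)) (π : A → B) (φ : List A → ℝ)
    (hL : ∀ I, ¬ Lang X I → φ I = 0) (n : ℕ) (v : Fin n → B) :
    psiProj X π φ (List.ofFn v) =
      ∑ w : Fin n → A, if π ∘ w = v then φ (List.ofFn w) else 0 := by
  rw [psi_len X π φ n _ (by simp)]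
  refine Finset.sum_congr rfl fun w _ => ?_
  have : List.map π (List.ofFn w) = List.ofFn v ↔ π ∘ w = v := by
    rw [List.map_ofFn]; exact List.ofFn_injective.eq_iff
  simp only [this]
  by_cases h : Lang X (List.ofFn w)
  · simp [h]
  · simp [h, hL _ h]

lemma measurable_block (π : A → B) : Measurable (blockMap π) :=
  measurable_pi_iff.2 fun j => (measurable_of_finite π).comp (measurable_pi_apply j)

lemma PW_push (μ : Measure (ℕ → A)) [IsProbabilityMeasure μ] (π : A → B) (i n : ℕ)
    (v : Fin n → B) :
    PW (μ.map (blockMap π)) i n v = ∑ w : Fin n → A, if π ∘ w = v then PW μ i n w else 0 := by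
  rw [← marg μ i n (fun w => π ∘ w) v, PW,
    map_measureReal_apply (measurable_block π) (measurable_win i n (measurableSet_singleton v))]
  rfl

lemma lang_of_pos (X : Set (ℕ → A)) (μ : Measure (ℕ → A))
    [IsProbabilityMeasure μ] (hX : μ X = 1) (n : ℕ) (w : Fin n → A) (h : 0 < PW μ 0 n w)
    (hXm : MeasurableSet X) :
    Lang X (List.ofFn w) := by
  rw [← mw_eq X hXm μ hX, mw] at h
  rw [Lang]
  by_contra hne
  rw [Set.not_nonempty_iff_eq_empty] at hne
  rw [hne] at h
  simp at h

lemma phiStar_term (μ : Measure (ℕ → A)) [IsProbabilityMeasure μ] (φ : List A → ℝ) (n : ℕ)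
    (a : ℝ) (hn : 1 ≤ n) (h : (a : EReal) < (((n : ℝ)⁻¹ : ℝ) : EReal) * intlog μ (genPot φ n)) :
    (∀ w : Fin n → A, 0 < PW μ 0 n w → 0 < φ (List.ofFn w)) ∧
      a < (∑ w, PW μ 0 n w * Real.log (φ (List.ofFn w))) / n := by
  have hp : ∀ w : Fin n → A, 0 < PW μ 0 n w → 0 < φ (List.ofFn w) := by
    intro w hw
    by_contra hφ
    rw [intlog_bot μ φ n w hw (not_lt.1 hφ), EReal.coe_mul_bot_of_pos (by positivity)] at h
    exact not_lt_bot h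
  refine ⟨hp, ?_⟩
  rw [intlog_real μ φ n hp, ← EReal.coe_mul, EReal.coe_lt_coe_iff] at h
  rw [div_eq_inv_mul]; exact h

lemma EW_split (μ : Measure (ℕ → A)) (f : List A → ℝ) (i n : ℕ) :
    EW μ f i n = EW μ (fun _ => 0) i n + ∑ w, PW μ i n w * f (List.ofFn w) := by
  simp [EW, Finset.sum_add_distrib]

lemma upper (X : Set (ℕ → A)) (Y : Set (ℕ → B)) (hXm : MeasurableSet X) (hYm : MeasurableSet Y)
    (π : A → B) (φ : List A → ℝ) (hφ0 : ∀ I, 0 ≤ φ I) (hL : ∀ I, ¬ Lang X I → φ I = 0)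
    (μ : Measure (ℕ → A)) [IsProbabilityMeasure μ] (ν : Measure (ℕ → B)) [IsProbabilityMeasure ν]
    (hμ : μ.map shiftMap = μ) (hμX : μ X = 1) (hν : ν.map shiftMap = ν) (hνY : ν Y = 1)
    (hpush : μ.map (blockMap π) = ν) :
    PhiStar μ (genPot φ) + ((ent X μ - ent Y ν : ℝ) : EReal) ≤
      PhiStar ν (genPot (psiProj X π φ)) := by
  refine liminf_transfer _ _ (fun n => EW μ (fun _ => 0) 0 n / n - EW ν (fun _ => 0) 0 n / n) _
    ((ent_tendsto X hXm μ hμX hμ).sub (ent_tendsto Y hYm ν hνY hν)) ?_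
  intro a ha
  filter_upwards [eventually_lt_of_lt_liminf ha, eventually_ge_atTop 1] with n h1 hn
  obtain ⟨hp, hlt⟩ := phiStar_term μ φ n a hn h1
  have hνs : ∀ v : Fin n → B, PW ν 0 n v = ∑ w : Fin n → A, if π ∘ w = v then PW μ 0 n w else 0 :=
    fun v => by rw [← hpush, PW_push]
  have hψs := psi_ofFn X π φ hL n
  have hpos : ∀ v : Fin n → B, 0 < PW ν 0 n v → 0 < psiProj X π φ (List.ofFn v) := by
    intro v hv
    rw [hνs] at hv
    obtain ⟨w, _, hw⟩ := Finset.exists_lt_of_sum_lt (s := Finset.univ)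
      (f := fun _ : Fin n → A => (0 : ℝ))
      (by simpa using hv)
    rw [hψs]
    have hwv : π ∘ w = v := by
      by_contra h; simp [h] at hw
    simp only [hwv, if_true] at hw
    refine lt_of_lt_of_le ?_ (Finset.single_le_sum
      (f := fun w : Fin n → A => if π ∘ w = v then φ (List.ofFn w) else 0)
      (fun w _ => by split_ifs <;> simp [hφ0]) (Finset.mem_univ w))
    simpa [hwv] using hp w hw
  rw [intlog_real ν _ n hpos, ← EReal.coe_mul, EReal.coe_le_coe_iff]
  have g := cond_gibbs (fun w : Fin n → A => π ∘ w) (fun w => PW μ 0 n w) (fun w => φ (List.ofFn w))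
    (fun w => PW_nonneg _ _ _ _) (fun w => hφ0 _) hp (fun v => PW ν 0 n v)
    (fun v => psiProj X π φ (List.ofFn v)) hνs hψs
  have g' : EW μ (fun I => Real.log (φ I)) 0 n ≤
    EW ν (fun J => Real.log (psiProj X π φ J)) 0 n := g
  rw [EW_split μ, EW_split ν] at g'
  have hn' : (0 : ℝ) < n := by exact_mod_cast hn
  have g2 := (div_le_div_iff_of_pos_right hn').2 g'
  rw [add_div, add_div] at g2
  rw [← div_eq_inv_mul]
  linarith

end
end WES

set_option linter.unusedSectionVars false

namespace WES
section
variable {A B : Type}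
    [Fintype A] [TopologicalSpace A] [DiscreteTopology A] [MeasurableSpace A] [BorelSpace A]
    [Fintype B] [TopologicalSpace B] [DiscreteTopology B] [MeasurableSpace B] [BorelSpace B]

lemma ofFn_win_add (i a b : ℕ) (x : ℕ → A) :
    List.ofFn (win i (a + b) x) = List.ofFn (win i a x) ++ List.ofFn (win (i + a) b x) := by
  rw [← List.ofFn_fin_append]
  congr 1
  funext k
  refine Fin.addCases (fun k => ?_) (fun k => ?_) k
  · simp [win]
  · simp [win, add_assoc]

lemma PW_sub (η : Measure (ℕ → A)) [IsProbabilityMeasure η] (i n N : ℕ) (h : i + n ≤ N)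
    (v : Fin n → A) :
    PW η i n v = ∑ w : Fin N → A,
      if (fun k : Fin n => w ⟨i + k, by omega⟩) = v then PW η 0 N w else 0 := by
  rw [← marg η 0 N (fun w => fun k : Fin n => w ⟨i + k, by omega⟩) v, PW]
  congr 1
  ext x
  simp [win]
  rfl

lemma pos_append (φ : List A → ℝ) (hφ0 : ∀ I, 0 ≤ φ I) (K : ℝ)
    (hK : ∀ I J, φ (I ++ J) ≤ K * φ I * φ J) (I J : List A) (h : 0 < φ (I ++ J)) :
    0 < φ I ∧ 0 < φ J := by
  have h1 := hK I J
  constructor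
  · rcases (hφ0 I).eq_or_lt with e | e
    · rw [← e] at h1; simp at h1; linarith
    · exact e
  · rcases (hφ0 J).eq_or_lt with e | e
    · rw [← e] at h1; simp at h1; linarith
    · exact e

lemma exists_eta (X : Set (ℕ → A)) (hX : IsSubshift X)
    (hXm : MeasurableSet X)
    (π : A → B) (φ : List A → ℝ) (hφ0 : ∀ I, 0 ≤ φ I) (hL : ∀ I, ¬ Lang X I → φ I = 0)
    (K : ℝ) (hK : ∀ I J, φ (I ++ J) ≤ K * φ I * φ J)
    (ν : Measure (ℕ → B)) [IsProbabilityMeasure ν]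
    (hν : ν.map shiftMap = ν) (N : ℕ)
    (hpos : ∀ v : Fin N → B, 0 < PW ν 0 N v → 0 < psiProj X π φ (List.ofFn v)) :
    ∃ η : Measure (ℕ → A), IsProbabilityMeasure η ∧ η X = 1 ∧
      EW η (fun I => Real.log (φ I)) 0 N =
        EW ν (fun J => Real.log (psiProj X π φ J)) 0 N ∧
      (∀ i n, i + n ≤ N → ∀ u : Fin n → A, 0 < PW η i n u → 0 < φ (List.ofFn u)) ∧
      (∀ i n, i + n ≤ N → ∀ v : Fin n → B, PW (η.map (blockMap π)) i n v = PW ν 0 n v) := by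
  set t : (Fin N → A) → ℝ := fun w => φ (List.ofFn w) *
    (PW ν 0 N (π ∘ w) / psiProj X π φ (List.ofFn (π ∘ w))) with ht
  have hψs := psi_ofFn X π φ hL N
  have hψ0 : ∀ v : Fin N → B, 0 ≤ psiProj X π φ (List.ofFn v) := fun v => by
    rw [hψs]; exact Finset.sum_nonneg fun w _ => by split_ifs <;> simp [hφ0]
  have ht0 : ∀ w, 0 ≤ t w := fun w =>
    mul_nonneg (hφ0 _) (div_nonneg (PW_nonneg _ _ _ _) (hψ0 _))
  obtain ⟨c1, c2⟩ := cond_gibbs_eq (fun w : Fin N → A => π ∘ w) t (fun w => φ (List.ofFn w))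
    (fun w => hφ0 _) (fun v => PW ν 0 N v) (fun v => psiProj X π φ (List.ofFn v))
    (fun v => PW_nonneg _ _ _ _) hψs hpos (fun w => rfl)
  have ht1 : ∑ w, t w = 1 := by
    rw [← sum_PW ν 0 N]
    simp only [c1]
    rw [Finset.sum_comm]
    simp
  obtain ⟨x0, hx0⟩ := hX.1
  have hch : ∀ w : Fin N → A, ∃ x ∈ X, Lang X (List.ofFn w) → win 0 N x = w := by
    intro w
    by_cases h : Lang X (List.ofFn w)
    · obtain ⟨x, hx, hw⟩ := (lang_iff X N w).1 h
      exact ⟨x, hx, fun _ => hw⟩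
    · exact ⟨x0, hx0, fun h' => absurd h' h⟩
  choose x hxX hxw using hch
  have htw : ∀ w, 0 < t w → 0 < φ (List.ofFn w) ∧ win 0 N (x w) = w := by
    intro w hw
    have h1 : 0 < φ (List.ofFn w) := by
      rcases (hφ0 (List.ofFn w)).eq_or_lt with e | e
      · simp [ht, ← e] at hw
      · exact e
    refine ⟨h1, hxw w ?_⟩
    by_contra h
    rw [hL _ h] at h1
    exact lt_irrefl _ h1
  let η : Measure (ℕ → A) := ∑ w, ENNReal.ofReal (t w) • Measure.dirac (x w)
  have hη : ∀ S, MeasurableSet S → η S = ENNReal.ofReal (∑ w, if x w ∈ S then t w else 0) := by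
    intro S hS
    rw [ENNReal.ofReal_sum_of_nonneg (fun w _ => by split_ifs <;> simp [ht0])]
    simp only [η, Measure.finsetSum_apply, Measure.smul_apply, Measure.dirac_apply' _ hS,
      smul_eq_mul]
    refine Finset.sum_congr rfl fun w _ => ?_
    by_cases h : x w ∈ S <;> simp [h]
  have hηP : IsProbabilityMeasure η := ⟨by rw [hη _ MeasurableSet.univ]; simp [ht1]⟩
  have hηr : ∀ S, MeasurableSet S → η.real S = ∑ w, if x w ∈ S then t w else 0 := by
    intro S hS
    rw [Measure.real, hη S hS, ENNReal.toReal_ofReal]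
    exact Finset.sum_nonneg fun w _ => by split_ifs <;> simp [ht0]
  have hPN : ∀ w, PW η 0 N w = t w := by
    intro w
    rw [PW, hηr _ (measurable_win _ _ (measurableSet_singleton w))]
    have : ∀ v, (if x v ∈ win 0 N ⁻¹' {w} then t v else 0) = if v = w then t v else 0 := by
      intro v
      rcases (ht0 v).eq_or_lt with e | e
      · simp [← e]
      · simp only [Set.mem_preimage, Set.mem_singleton_iff, (htw v e).2]
    rw [Finset.sum_congr rfl (fun v _ => this v)]; simp
  refine ⟨η, hηP, ?_, ?_, ?_, ?_⟩
  · rw [hη X hXm]; simp [hxX, ht1]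
  · simp only [EW, hPN]; exact c2
  · intro i n hin u hu
    rw [PW, hηr _ (measurable_win _ _ (measurableSet_singleton u))] at hu
    obtain ⟨w, _, hw⟩ := Finset.exists_lt_of_sum_lt (s := Finset.univ)
      (f := fun _ : Fin N → A => (0 : ℝ)) (by simpa using hu)
    have hwu : win i n (x w) = u := by
      by_contra h; simp [h] at hw
    have hw' : 0 < t w := by simpa [hwu] using hw
    obtain ⟨h1, h2⟩ := htw w hw'
    obtain ⟨b, rfl⟩ : ∃ b, N = i + n + b := ⟨N - (i + n), by omega⟩
    rw [← h2, ofFn_win_add, ofFn_win_add] at h1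
    have h3 := (pos_append φ hφ0 K hK _ _ (pos_append φ hφ0 K hK _ _ h1).1).2
    rw [zero_add, hwu] at h3
    exact h3
  · intro i n hin v
    have : IsProbabilityMeasure (η.map (blockMap π)) :=
      Measure.isProbabilityMeasure_map (measurable_block π).aemeasurable
    rw [← PW_inv ν hν i, PW_sub _ i n N hin, PW_sub ν i n N hin]
    refine Finset.sum_congr rfl fun w _ => ?_
    have : PW (η.map (blockMap π)) 0 N w = PW ν 0 N w := by
      rw [PW_push, c1]
      simp only [hPN]
    rw [this]

lemma avg_close (g : ℕ → ℝ) (c : ℝ) (n N : ℕ) (h0 : ∀ j, 0 ≤ g j)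
    (h1 : ∀ j, g j ≤ 1) (hc0 : 0 ≤ c) (hc1 : c ≤ 1) (hN : 1 ≤ N)
    (h : ∀ j, j + n ≤ N → g j = c) :
    |(∑ j ∈ Finset.range N, g j) / N - c| ≤ n / N := by
  have hN' : (0 : ℝ) < N := by exact_mod_cast hN
  have e : (∑ j ∈ Finset.range N, g j) / N - c = (∑ j ∈ Finset.range N, (g j - c)) / N := by
    rw [Finset.sum_sub_distrib, Finset.sum_const, Finset.card_range, nsmul_eq_mul]
    field_simp
  rw [e, abs_div, abs_of_pos hN']
  refine (div_le_div_iff_of_pos_right hN').2 ?_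
  calc |∑ j ∈ Finset.range N, (g j - c)| ≤ ∑ j ∈ Finset.range N, |g j - c| :=
        Finset.abs_sum_le_sum_abs _ _
    _ ≤ ∑ j ∈ Finset.range N, if j ∈ Finset.Ico (N - n) N then (1 : ℝ) else 0 := by
        refine Finset.sum_le_sum fun j hj => ?_
        rw [Finset.mem_range] at hj
        split_ifs with hh
        · rw [abs_le]
          constructor <;> linarith [h0 j, h1 j]
        · rw [h j (by simp at hh; omega)]; simp
    _ ≤ n := by
        rw [← Finset.sum_filter, Finset.sum_const, nsmul_eq_mul, mul_one]
        have : (Finset.range N).filter (fun j => j ∈ Finset.Ico (N - n) N) ⊆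
            Finset.Ico (N - n) N := fun j hj => (Finset.mem_filter.1 hj).2
        have := Finset.card_le_card this
        rw [Nat.card_Ico] at this
        exact_mod_cast (by omega)

lemma exists_avg (η : Measure (ℕ → A)) [IsProbabilityMeasure η] (N : ℕ) (hN : 1 ≤ N) :
    ∃ m : ProbabilityMeasure (ℕ → A), ∀ S, MeasurableSet S →
      (m : Measure (ℕ → A)).real S =
        (∑ j ∈ Finset.range N, η.real (shiftMap^[j] ⁻¹' S)) / N := by
  let m : Measure (ℕ → A) := (N : ℝ≥0∞)⁻¹ • ∑ j ∈ Finset.range N, η.map shiftMap^[j]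
  have hm : ∀ S, MeasurableSet S →
      m S = (N : ℝ≥0∞)⁻¹ * ∑ j ∈ Finset.range N, η (shiftMap^[j] ⁻¹' S) := by
    intro S hS
    simp only [m, Measure.smul_apply, Measure.finsetSum_apply, smul_eq_mul]
    congr 1
    exact Finset.sum_congr rfl fun j _ =>
      Measure.map_apply (measurable_shift.iterate j) hS
  have hP : IsProbabilityMeasure m := ⟨by
    rw [hm _ MeasurableSet.univ]
    simp only [Set.preimage_univ, measure_univ, Finset.sum_const, Finset.card_range, nsmul_eq_mul,
      mul_one]
    exact ENNReal.inv_mul_cancel (by simp; omega) (by simp)⟩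
  refine ⟨⟨m, hP⟩, fun S hS => ?_⟩
  rw [ProbabilityMeasure.coe_mk, Measure.real, hm S hS, ENNReal.toReal_mul, ENNReal.toReal_sum
    (fun j _ => measure_ne_top _ _)]
  simp [div_eq_inv_mul, Measure.real]

lemma exists_muN (X : Set (ℕ → A)) (hX : IsSubshift X)
    (hXm : MeasurableSet X)
    (π : A → B) (φ : List A → ℝ) (hφ0 : ∀ I, 0 ≤ φ I) (hL : ∀ I, ¬ Lang X I → φ I = 0)
    (K : ℝ) (hKp : 0 < K) (hK : ∀ I J, φ (I ++ J) ≤ K * φ I * φ J) (C : ℝ) (hC0 : 0 ≤ C)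
    (hC : Real.log K ≤ C)
    (ν : Measure (ℕ → B)) [IsProbabilityMeasure ν]
    (hν : ν.map shiftMap = ν) (N : ℕ) (hN : 1 ≤ N)
    (hpos : ∀ v : Fin N → B, 0 < PW ν 0 N v → 0 < psiProj X π φ (List.ofFn v)) :
    ∃ m : ProbabilityMeasure (ℕ → A), (m : Measure (ℕ → A)) X = 1 ∧
      (∀ n (w : Fin n → A), |PW (m : Measure (ℕ → A)) 1 n w - PW (m : Measure (ℕ → A)) 0 n w|
        ≤ 1 / N) ∧
      (∀ n (v : Fin n → B),
        |PW ((m : Measure (ℕ → A)).map (blockMap π)) 0 n v - PW ν 0 n v| ≤ n / N) ∧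
      (∀ n (u : Fin n → A), φ (List.ofFn u) = 0 → PW (m : Measure (ℕ → A)) 0 n u ≤ n / N) ∧
      (∀ n, 1 ≤ n → 2 * n ≤ N → ∀ D, (∀ (η : Measure (ℕ → A)), IsProbabilityMeasure η →
          ∀ i l, l ≤ 2 * n → |EW η (fun I => Real.log (φ I)) i l| ≤ D) →
        n * EW ν (fun J => Real.log (psiProj X π φ J)) 0 N ≤
          N * EW (m : Measure (ℕ → A)) (fun I => Real.log (φ I)) 0 n + N * C +
            n * (4 * D + 2 * C)) := by
  obtain ⟨η, hηP, hηX, hηE, hηφ, hην⟩ := exists_eta X hX hXm π φ hφ0 hL K hK ν hν N hpos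
  obtain ⟨m, hm⟩ := exists_avg η N hN
  have hN' : (0 : ℝ) < N := by exact_mod_cast hN
  have hmP : ∀ i n w, PW (m : Measure (ℕ → A)) i n w =
      (∑ j ∈ Finset.range N, PW η (j + i) n w) / N := by
    intro i n w
    rw [PW, hm _ (measurable_win _ _ (measurableSet_singleton w))]
    congr 1
    refine Finset.sum_congr rfl fun j _ => ?_
    rw [PW]
    congr 1
    ext x
    simp [win_shift_iter]
  refine ⟨m, ?_, ?_, ?_, ?_, ?_⟩
  · have h1 : (m : Measure (ℕ → A)).real X = 1 := by
      rw [hm X hXm]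
      have : ∀ j ∈ Finset.range N, η.real (shiftMap^[j] ⁻¹' X) = 1 := by
        intro j _
        have : η (shiftMap^[j] ⁻¹' X) = 1 := by
          refine le_antisymm prob_le_one ?_
          rw [← hηX]
          exact measure_mono fun x hx => iter_mem X hX x hx j
        simp [Measure.real, this]
      rw [Finset.sum_congr rfl this, Finset.sum_const, Finset.card_range, nsmul_eq_mul, mul_one,
        div_self hN'.ne']
    rw [Measure.real, ENNReal.toReal_eq_one_iff] at h1
    exact h1
  · intro n w
    rw [hmP, hmP, ← sub_div, ← Finset.sum_sub_distrib]
    have : ∑ j ∈ Finset.range N, (PW η (j + 1) n w - PW η (j + 0) n w) =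
        PW η N n w - PW η 0 n w := Finset.sum_range_sub (fun j => PW η j n w) N
    rw [this, abs_div, abs_of_pos hN']
    refine (div_le_div_iff_of_pos_right hN').2 ?_
    rw [abs_le]
    constructor <;> linarith [PW_nonneg η N n w, PW_nonneg η 0 n w, PW_le_one η N n w,
      PW_le_one η 0 n w]
  · intro n v
    have hpP : IsProbabilityMeasure (η.map (blockMap π)) :=
      Measure.isProbabilityMeasure_map (measurable_block π).aemeasurable
    have e : PW ((m : Measure (ℕ → A)).map (blockMap π)) 0 n v =
        (∑ j ∈ Finset.range N, PW (η.map (blockMap π)) j n v) / N := by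
      simp only [PW_push, hmP]
      rw [Finset.sum_comm, Finset.sum_div]
      refine Finset.sum_congr rfl fun w _ => ?_
      split_ifs <;> simp
    rw [e]
    exact avg_close (fun j => PW (η.map (blockMap π)) j n v) _ n N (fun j => PW_nonneg _ _ _ _)
      (fun j => PW_le_one _ _ _ _) (PW_nonneg _ _ _ _) (PW_le_one _ _ _ _) hN
      (fun j hj => hην j n hj v)
  · intro n u hu
    have := avg_close (fun j => PW η j n u) 0 n N (fun j => PW_nonneg _ _ _ _)
      (fun j => PW_le_one _ _ _ _) le_rfl zero_le_one hN (fun j hj => by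
        rcases (PW_nonneg η j n u).eq_or_lt with e | e
        · exact e.symm
        · have := hηφ j n hj u e
          rw [hu] at this
          exact absurd this (lt_irrefl _))
    rw [hmP]
    simp only [add_zero]
    rw [sub_zero] at this
    exact (abs_le.1 this).2
  · intro n hn h2n D hD
    rw [← hηE]
    have hb := block_bound (EW η (fun I => Real.log (φ I))) N n hn h2n C D hC0 (by
      intro i a b hab
      refine EW_subadd η _ i a b C ?_
      intro u v huv
      have h1 := hηφ i (a + b) (by omega) _ huv
      rw [List.ofFn_fin_append] at h1
      obtain ⟨h2, h3⟩ := pos_append φ hφ0 K hK _ _ h1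
      have h4 := Real.log_le_log h1 (hK _ _)
      rw [Real.log_mul (mul_pos hKp h2).ne' h3.ne', Real.log_mul hKp.ne' h2.ne'] at h4
      linarith) (hD η hηP)
    refine hb.trans ?_
    have conc : ∑ i ∈ Finset.range N, EW η (fun I => Real.log (φ I)) i n ≤
        N * EW (m : Measure (ℕ → A)) (fun I => Real.log (φ I)) 0 n := by
      simp only [EW, hmP, add_zero]
      rw [Finset.sum_comm, Finset.mul_sum]
      refine Finset.sum_le_sum fun w _ => ?_
      rw [Finset.sum_add_distrib, mul_add, ← Finset.sum_mul]
      refine add_le_add ?_ (le_of_eq (by field_simp))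
      have := Real.concaveOn_negMulLog.le_map_sum (t := Finset.range N)
        (w := fun _ => (N : ℝ)⁻¹) (p := fun j => PW η j n w) (fun _ _ => by positivity)
        (by simp; field_simp) (fun j _ => PW_nonneg _ _ _ _)
      simp only [smul_eq_mul, ← Finset.mul_sum] at this
      rw [inv_mul_le_iff₀ hN'] at this
      rw [div_eq_inv_mul]
      exact this
    linarith

end
end WES

set_option linter.unusedSectionVars false

namespace WES
section
variable {A B : Type}
    [Fintype A] [TopologicalSpace A] [DiscreteTopology A] [MeasurableSpace A] [BorelSpace A]
    [Fintype B] [TopologicalSpace B] [DiscreteTopology B] [MeasurableSpace B] [BorelSpace B]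

lemma PW_lim {U : Filter ℕ} (m : ℕ → ProbabilityMeasure (ℕ → A)) (μ : ProbabilityMeasure (ℕ → A))
    (h : Tendsto m U (𝓝 μ)) (i n : ℕ) (w : Fin n → A) :
    Tendsto (fun N => PW (m N : Measure (ℕ → A)) i n w) U
      (𝓝 (PW (μ : Measure (ℕ → A)) i n w)) := by
  have hc : IsClopen (win i n ⁻¹' {w} : Set (ℕ → A)) :=
    (isClopen_discrete {w}).preimage (continuous_win i n)
  have := ProbabilityMeasure.tendsto_measure_of_isClopen_of_tendsto h hc
  exact (NNReal.tendsto_coe.2 this)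

lemma EW_lim {U : Filter ℕ} (m : ℕ → ProbabilityMeasure (ℕ → A)) (μ : ProbabilityMeasure (ℕ → A))
    (h : Tendsto m U (𝓝 μ)) (f : List A → ℝ) (i n : ℕ) :
    Tendsto (fun N => EW (m N : Measure (ℕ → A)) f i n) U
      (𝓝 (EW (μ : Measure (ℕ → A)) f i n)) := by
  unfold EW
  refine tendsto_finsetSum _ fun w _ => ?_
  have := PW_lim m μ h i n w
  exact ((Real.continuous_negMulLog.tendsto _).comp this).add (this.mul_const _)

lemma lower (X : Set (ℕ → A)) (Y : Set (ℕ → B)) (hX : IsSubshift X)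
    (hYm : MeasurableSet Y)
    (π : A → B) (φ : List A → ℝ) (hφ0 : ∀ I, 0 ≤ φ I) (hL : ∀ I, ¬ Lang X I → φ I = 0)
    (K : ℝ) (hKp : 0 < K) (hK : ∀ I J, φ (I ++ J) ≤ K * φ I * φ J)
    (ν : Measure (ℕ → B)) [IsProbabilityMeasure ν]
    (hν : ν.map shiftMap = ν) (hνY : ν Y = 1)
    (hb : PhiStar ν (genPot (psiProj X π φ)) ≠ ⊥) :
    ∃ μ : ProbabilityMeasure (ℕ → A), μ ∈ MInv X ∧ pushM π μ = ν ∧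
      PhiStar ν (genPot (psiProj X π φ)) ≤
      PhiStar (μ : Measure (ℕ → A)) (genPot φ) +
        ((ent X (μ : Measure (ℕ → A)) - ent Y ν : ℝ) : EReal) := by
  have hXc : IsClosed X := hX.2.1.isClosed
  have hXm : MeasurableSet X := hXc.measurableSet
  obtain ⟨C, hC0, hC⟩ : ∃ C : ℝ, 0 ≤ C ∧ Real.log K ≤ C :=
    ⟨max 0 (Real.log K), le_max_left _ _, le_max_right _ _⟩
  obtain ⟨a₀, ha₀⟩ : ∃ a : ℝ, (a : EReal) < PhiStar ν (genPot (psiProj X π φ)) := by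
    obtain ⟨a, _, ha⟩ := EReal.lt_iff_exists_real_btwn.1 (bot_lt_iff_ne_bot.2 hb)
    exact ⟨a, ha⟩
  have hev : ∀ᶠ N : ℕ in atTop, 1 ≤ N ∧
      ∀ v : Fin N → B, 0 < PW ν 0 N v → 0 < psiProj X π φ (List.ofFn v) := by
    filter_upwards [eventually_lt_of_lt_liminf ha₀, eventually_ge_atTop 1] with N h1 hN
    exact ⟨hN, (phiStar_term ν _ N a₀ hN h1).1⟩
  obtain ⟨x0, hx0⟩ := hX.1
  have hch : ∀ N : ℕ, ∃ m : ProbabilityMeasure (ℕ → A), (1 ≤ N ∧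
      ∀ v : Fin N → B, 0 < PW ν 0 N v → 0 < psiProj X π φ (List.ofFn v)) →
      ((m : Measure (ℕ → A)) X = 1 ∧
      (∀ n (w : Fin n → A), |PW (m : Measure (ℕ → A)) 1 n w - PW (m : Measure (ℕ → A)) 0 n w|
        ≤ 1 / N) ∧
      (∀ n (v : Fin n → B),
        |PW ((m : Measure (ℕ → A)).map (blockMap π)) 0 n v - PW ν 0 n v| ≤ n / N) ∧
      (∀ n (u : Fin n → A), φ (List.ofFn u) = 0 → PW (m : Measure (ℕ → A)) 0 n u ≤ n / N) ∧
      (∀ n, 1 ≤ n → 2 * n ≤ N → ∀ D, (∀ (η : Measure (ℕ → A)), IsProbabilityMeasure η →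
          ∀ i l, l ≤ 2 * n → |EW η (fun I => Real.log (φ I)) i l| ≤ D) →
        n * EW ν (fun J => Real.log (psiProj X π φ J)) 0 N ≤
          N * EW (m : Measure (ℕ → A)) (fun I => Real.log (φ I)) 0 n + N * C +
            n * (4 * D + 2 * C))) := by
    intro N
    by_cases h : (1 ≤ N ∧
      ∀ v : Fin N → B, 0 < PW ν 0 N v → 0 < psiProj X π φ (List.ofFn v))
    · obtain ⟨m, hm⟩ := exists_muN X hX hXm π φ hφ0 hL K hKp hK C hC0 hC ν hν N h.1 h.2
      exact ⟨m, fun _ => hm⟩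
    · exact ⟨⟨Measure.dirac x0, inferInstance⟩, fun h' => absurd h' h⟩
  choose m hm using hch
  have hmE : ∀ᶠ N : ℕ in atTop, _ := hev.mono fun N h => hm N h
  set U : Ultrafilter ℕ := Ultrafilter.of atTop with hU
  have hUt : (U : Filter ℕ) ≤ atTop := Ultrafilter.of_le atTop
  obtain ⟨μ, -, hμl⟩ := isCompact_univ.ultrafilter_le_nhds (U.map m) (by simp)
  have hlim : Tendsto m U (𝓝 μ) := hμl
  have hmU := hmE.filter_mono hUt
  have hdiv : ∀ c : ℝ, Tendsto (fun N : ℕ => c / (N : ℝ)) U (𝓝 0) := fun c =>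
    (tendsto_const_div_atTop_nhds_zero_nat c).mono_left hUt
  have hμX : (μ : Measure (ℕ → A)) X = 1 := by
    refine le_antisymm prob_le_one ?_
    refine le_trans ?_ (ProbabilityMeasure.limsup_measure_closed_le_of_tendsto hlim hXc)
    have : (fun N => (m N : Measure (ℕ → A)) X) =ᶠ[(U : Filter ℕ)] fun _ => 1 :=
      hmU.mono fun N h => h.1
    rw [limsup_congr this, limsup_const]
  have hinv : (μ : Measure (ℕ → A)).map shiftMap = μ := by
    have : IsProbabilityMeasure ((μ : Measure (ℕ → A)).map shiftMap) :=
      Measure.isProbabilityMeasure_map measurable_shift.aemeasurable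
    refine ext_PW _ _ fun n w => ?_
    have e := PW_shift (μ : Measure (ℕ → A)) 0 1 n w
    simp only [Function.iterate_one, add_zero] at e
    rw [e]
    have h1 := ((PW_lim m μ hlim 1 n w).sub (PW_lim m μ hlim 0 n w)).abs
    have h2 := le_of_tendsto_of_tendsto h1 (hdiv 1) (hmU.mono fun N h => h.2.1 n w)
    exact sub_eq_zero.1 (abs_nonpos_iff.1 h2)
  have hpush : (μ : Measure (ℕ → A)).map (blockMap π) = ν := by
    have : IsProbabilityMeasure ((μ : Measure (ℕ → A)).map (blockMap π)) :=
      Measure.isProbabilityMeasure_map (measurable_block π).aemeasurable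
    refine ext_PW _ _ fun n v => ?_
    have h1 : Tendsto (fun N => PW ((m N : Measure (ℕ → A)).map (blockMap π)) 0 n v) U
        (𝓝 (PW ((μ : Measure (ℕ → A)).map (blockMap π)) 0 n v)) := by
      simp only [PW_push]
      refine tendsto_finsetSum _ fun w _ => ?_
      split_ifs
      · exact PW_lim m μ hlim 0 n w
      · exact tendsto_const_nhds
    have h2 := le_of_tendsto_of_tendsto (h1.sub_const (PW ν 0 n v)).abs (hdiv n)
      (hmU.mono fun N h => h.2.2.1 n v)
    exact sub_eq_zero.1 (abs_nonpos_iff.1 h2)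
  have hφpos : ∀ n (u : Fin n → A), 0 < PW (μ : Measure (ℕ → A)) 0 n u → 0 < φ (List.ofFn u) := by
    intro n u hu
    by_contra hφ
    have hz : φ (List.ofFn u) = 0 := le_antisymm (not_lt.1 hφ) (hφ0 _)
    have h2 := le_of_tendsto_of_tendsto (PW_lim m μ hlim 0 n u) (hdiv n)
      (hmU.mono fun N h => h.2.2.2.1 n u hz)
    linarith
  have hkey : ∀ a : ℝ, (a : EReal) < PhiStar ν (genPot (psiProj X π φ)) → ∀ n : ℕ, 1 ≤ n →
      n * (a + ent Y ν) ≤ EW (μ : Measure (ℕ → A)) (fun I => Real.log (φ I)) 0 n + C := by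
    intro a ha n hn
    obtain ⟨D, hD⟩ := EW_bound (A := A) (fun I => Real.log (φ I)) (2 * n)
    have l1 : Tendsto (fun N : ℕ => (n : ℝ) * (a + EW ν (fun _ => 0) 0 N / N)) U
        (𝓝 (n * (a + ent Y ν))) :=
      (((ent_tendsto Y hYm ν hνY hν).mono_left hUt).const_add a).const_mul _
    have l2 : Tendsto (fun N : ℕ => EW (m N : Measure (ℕ → A)) (fun I => Real.log (φ I)) 0 n + C +
        (n * (4 * D + 2 * C)) / (N : ℝ)) U
        (𝓝 (EW (μ : Measure (ℕ → A)) (fun I => Real.log (φ I)) 0 n + C + 0)) :=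
      ((EW_lim m μ hlim _ 0 n).add_const C).add (hdiv _)
    rw [add_zero] at l2
    refine le_of_tendsto_of_tendsto l1 l2 ?_
    have h1 := (eventually_lt_of_lt_liminf ha).filter_mono hUt
    have h3 := (eventually_ge_atTop (2 * n)).filter_mono hUt
    filter_upwards [hmU, h1, h3] with N hN h1 h3
    have hN1 : 1 ≤ N := by omega
    have hN' : (0 : ℝ) < N := by exact_mod_cast hN1
    have hn' : (0 : ℝ) < n := by exact_mod_cast hn
    have h5 := (phiStar_term ν _ N a hN1 h1).2
    have h6 := hN.2.2.2.2 n hn h3 D hD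
    rw [EW_split] at h6
    rw [lt_div_iff₀ hN'] at h5
    have h7 : (n : ℝ) * (a * N) ≤ n * ∑ w, PW ν 0 N w * Real.log (psiProj X π φ (List.ofFn w)) :=
      mul_le_mul_of_nonneg_left h5.le hn'.le
    rw [← mul_le_mul_iff_left₀ hN']
    have e1 : (n : ℝ) * (a + EW ν (fun _ => 0) 0 N / N) * N =
        n * (a * N) + n * EW ν (fun _ => 0) 0 N := by field_simp
    have e2 : (EW (m N : Measure (ℕ → A)) (fun I => Real.log (φ I)) 0 n + C +
        (n * (4 * D + 2 * C)) / (N : ℝ)) * N =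
        N * EW (m N : Measure (ℕ → A)) (fun I => Real.log (φ I)) 0 n + N * C +
            n * (4 * D + 2 * C) := by field_simp
    rw [e1, e2]
    linarith
  refine ⟨μ, ⟨hinv, hμX⟩, hpush, ?_⟩
  have ht := liminf_transfer
    (fun n : ℕ => (((n : ℝ)⁻¹ : ℝ) : EReal) * intlog ν (genPot (psiProj X π φ) n))
    (fun n : ℕ => (((n : ℝ)⁻¹ : ℝ) : EReal) * intlog (μ : Measure (ℕ → A)) (genPot φ n))
    (fun n => ent Y ν - C / n - EW (μ : Measure (ℕ → A)) (fun _ => 0) 0 n / n)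
    (ent Y ν - 0 - ent X (μ : Measure (ℕ → A)))
    (((tendsto_const_div_atTop_nhds_zero_nat C).const_sub _).sub (ent_tendsto X hXm _ hμX hinv))
    (by
      intro a ha
      filter_upwards [eventually_ge_atTop 1] with n hn
      have hn' : (0 : ℝ) < n := by exact_mod_cast hn
      have h1 := hkey a ha n hn
      rw [intlog_real _ φ n (hφpos n), ← EReal.coe_mul, EReal.coe_le_coe_iff]
      rw [EW_split] at h1
      rw [← mul_le_mul_iff_right₀ hn', mul_inv_cancel_left₀ hn'.ne']
      have e : (n : ℝ) * (a + (ent Y ν - C / n - EW (μ : Measure (ℕ → A)) (fun _ => 0) 0 n / n)) =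
          n * (a + ent Y ν) - C - EW (μ : Measure (ℕ → A)) (fun _ => 0) 0 n := by
        field_simp
        ring
      rw [e]
      linarith)
  have ht' : PhiStar ν (genPot (psiProj X π φ)) +
      ((ent Y ν - 0 - ent X (μ : Measure (ℕ → A)) : ℝ) : EReal) ≤
      PhiStar (μ : Measure (ℕ → A)) (genPot φ) := ht
  calc PhiStar ν (genPot (psiProj X π φ)) = PhiStar ν (genPot (psiProj X π φ)) +
      ((ent Y ν - 0 - ent X (μ : Measure (ℕ → A)) : ℝ) : EReal) +
        ((ent X (μ : Measure (ℕ → A)) - ent Y ν : ℝ) : EReal) := by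
        rw [add_assoc, ← EReal.coe_add]
        have : ent Y ν - 0 - ent X (μ : Measure (ℕ → A)) +
          (ent X (μ : Measure (ℕ → A)) - ent Y ν) = 0 := by ring
        rw [this, EReal.coe_zero, add_zero]
    _ ≤ _ := add_le_add_left ht' _

/-- truncation of a word function to the language -/
noncomputable def trunc (X : Set (ℕ → A)) (φ : List A → ℝ) (I : List A) : ℝ :=
  if Lang X I then φ I else 0

lemma psi_trunc (X : Set (ℕ → A)) (π : A → B) (φ : List A → ℝ) :
    psiProj X π (trunc X φ) = psiProj X π φ := by
  funext J
  refine Finset.sum_congr rfl fun w _ => ?_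
  by_cases h : Lang X (List.ofFn w) <;> simp [h, trunc]

lemma phiStar_trunc (X : Set (ℕ → A)) (hXm : MeasurableSet X) (φ : List A → ℝ)
    (μ : Measure (ℕ → A)) [IsProbabilityMeasure μ] (hμX : μ X = 1) :
    PhiStar μ (genPot (trunc X φ)) = PhiStar μ (genPot φ) := by
  have hae : ∀ᵐ x ∂μ, x ∈ X := (prob_compl_eq_zero_iff hXm).2 hμX
  have : ∀ n, intlog μ (genPot (trunc X φ) n) = intlog μ (genPot φ n) := by
    intro n
    have h : ∀ᵐ x ∂μ, genPot (trunc X φ) n x = genPot φ n x := by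
      filter_upwards [hae] with x hx
      simp only [genPot, trunc, wordOf_eq]
      rw [if_pos (lang_win X x hx n)]
    unfold intlog
    congr 2
    · exact lintegral_congr_ae (h.mono fun x hx => by simp only [hx])
    · exact lintegral_congr_ae (h.mono fun x hx => by simp only [hx])
  unfold PhiStar
  simp only [this]

theorem main (X : Set (ℕ → A)) (Y : Set (ℕ → B)) (hX : IsSubshift X) (hY : IsSubshift Y)
    (π : A → B) (φ : List A → ℝ) (hφ : Submult X φ)
    (ν : ProbabilityMeasure (ℕ → B)) (hν : ν ∈ MInv Y) :
    (⨆ μ ∈ {μ : ProbabilityMeasure (ℕ → A) |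
        μ ∈ MInv X ∧ pushM π μ = (ν : Measure (ℕ → B))},
        (PhiStar (μ : Measure (ℕ → A)) (genPot φ) +
          ((ent X (μ : Measure (ℕ → A)) - ent Y (ν : Measure (ℕ → B)) : ℝ) : EReal))) =
      PhiStar (ν : Measure (ℕ → B)) (genPot (psiProj X π φ)) := by
  have hXm : MeasurableSet X := hX.2.1.isClosed.measurableSet
  have hYm : MeasurableSet Y := hY.2.1.isClosed.measurableSet
  obtain ⟨h0, -, c, hc, h2⟩ := hφ
  have t0 : ∀ I, 0 ≤ trunc X φ I := by
    intro I
    unfold trunc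
    split_ifs with h
    · exact h0 I h
    · exact le_rfl
  have tL : ∀ I, ¬ Lang X I → trunc X φ I = 0 := fun I h => if_neg h
  have tK : ∀ I J, trunc X φ (I ++ J) ≤ c⁻¹ * trunc X φ I * trunc X φ J := by
    intro I J
    by_cases h : Lang X (I ++ J)
    · obtain ⟨hI, hJ⟩ := lang_append X hX I J h
      simp only [trunc, h, hI, hJ, if_true]
      exact h2 I J h
    · rw [tL _ h]
      exact mul_nonneg (mul_nonneg (inv_pos.2 hc).le (t0 _)) (t0 _)
  refine le_antisymm (iSup₂_le ?_) ?_
  · rintro μ ⟨hμ, hp⟩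
    have := upper X Y hXm hYm π (trunc X φ) t0 tL (μ : Measure (ℕ → A)) (ν : Measure (ℕ → B))
      hμ.1 hμ.2 hν.1 hν.2 hp
    rwa [psi_trunc, phiStar_trunc X hXm φ _ hμ.2] at this
  · by_cases hb : PhiStar (ν : Measure (ℕ → B)) (genPot (psiProj X π φ)) = ⊥
    · rw [hb]; exact bot_le
    · obtain ⟨μ, hμ, hp, hle⟩ := lower X Y hX hYm π (trunc X φ) t0 tL c⁻¹ (inv_pos.2 hc) tK
        (ν : Measure (ℕ → B)) hν.1 hν.2 (by rwa [psi_trunc])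
      rw [psi_trunc, phiStar_trunc X hXm φ _ hμ.2] at hle
      exact hle.trans (le_iSup₂_of_le μ ⟨hμ, hp⟩ le_rfl)

end
end WES

/-- Proposition 3.3(i) / `pro-2.2`(i): relativized variational principle.
`ψ(J) = Σ_{πI = J} φ(I)` is sub-multiplicative on `L(Y)` and
`sup{Φ_*(μ) + h_μ(σ_X) − h_ν(σ_Y) : μ∘π⁻¹ = ν} = Ψ_*(ν)`. -/
theorem weighted_eq_states_stmt_5 {A B : Type}
    [Fintype A] [TopologicalSpace A] [DiscreteTopology A] [MeasurableSpace A] [BorelSpace A]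
    [Fintype B] [TopologicalSpace B] [DiscreteTopology B] [MeasurableSpace B] [BorelSpace B]
    (X : Set (ℕ → A)) (Y : Set (ℕ → B)) (hX : IsSubshift X) (hY : IsSubshift Y)
    (π : A → B) (hπ : blockMap π '' X = Y)
    (φ : List A → ℝ) (hφ : Submult X φ)
    (ν : ProbabilityMeasure (ℕ → B)) (hν : ν ∈ MInv Y) :
    Submult Y (psiProj X π φ) ∧
    (⨆ μ ∈ {μ : ProbabilityMeasure (ℕ → A) |
        μ ∈ MInv X ∧ pushM π μ = (ν : Measure (ℕ → B))},
        (PhiStar (μ : Measure (ℕ → A)) (genPot φ) +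
          ((ent X (μ : Measure (ℕ → A)) - ent Y (ν : Measure (ℕ → B)) : ℝ) : EReal))) =
      PhiStar (ν : Measure (ℕ → B)) (genPot (psiProj X π φ)) := by
  exact ⟨WES.psi_submult X Y hX π φ hφ, WES.main X Y hX hY π φ hφ ν hν⟩
end

section
/- Let (X, σ_X) and (Y, σ_Y) be one-sided subshifts over finite alphabets, with Y a factor of X via a one-block factor map π : X → Y. Let Φ = (log φ_n)_{n=1}^∞ ∈ C_sa(X, σ_X) be generated by a sub-multiplicative φ : L(X) → [0,∞), and let ν ∈ M(Y, σ_Y). Then the set I_ν(Φ) of conditional equilibrium states of Φ with respect to ν is a non-empty compact convex subset of M(X, σ_X); and if ν is ergodic, then each extreme point of I_ν(Φ) is an ergodic measure on X. -/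
open MeasureTheory Filter Topology
open scoped Classical ENNReal NNReal

open MeasureTheory Filter Topology
open scoped Classical ENNReal NNReal

set_option linter.unusedSectionVars false

section basics
variable {A : Type} [Fintype A] [TopologicalSpace A] [DiscreteTopology A] [MeasurableSpace A] [BorelSpace A]


/-- prefix of length n -/
def pre {A : Type} (n : ℕ) (x : ℕ → A) : Fin n → A := fun i => x i

lemma cyl_ofFn {A : Type} {n : ℕ} (w : Fin n → A) : cyl (List.ofFn w) = pre n ⁻¹' {w} := by
  ext x
  simp only [cyl, Set.mem_ofPred_eq, Set.mem_preimage, Set.mem_singleton_iff, pre, funext_iff]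
  constructor
  · intro h i
    have := h ⟨i, by simp⟩
    simpa using this
  · intro h i
    have := h ⟨i, by simpa using i.2⟩
    simpa using this

lemma wordOf_eq {A : Type} (n : ℕ) (x : ℕ → A) : wordOf x n = List.ofFn (pre n x) := rfl

lemma continuous_pre (n : ℕ) : Continuous (pre (A := A) n) := by
  unfold pre; fun_prop

lemma continuous_shift : Continuous (shiftMap (A := A)) := by
  unfold shiftMap; fun_prop

lemma measurable_pre (n : ℕ) : Measurable (pre (A := A) n) := by
  unfold pre; fun_prop

lemma measurable_shift : Measurable (shiftMap (A := A)) := by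
  unfold shiftMap; fun_prop

lemma iter_shift {A : Type} (n : ℕ) (x : ℕ → A) (i : ℕ) : (shiftMap^[n] x) i = x (n + i) := by
  induction n generalizing x with
  | zero => simp
  | succ n ih => rw [Function.iterate_succ_apply, ih]; simp only [shiftMap]; congr 1; ring

/-- probability of a word -/
noncomputable def pw (n : ℕ) (μ : Measure (ℕ → A)) (w : Fin n → A) : ℝ := μ.real (pre n ⁻¹' {w})

lemma isClopen_pre (n : ℕ) (S : Set (Fin n → A)) : IsClopen (pre n ⁻¹' S) :=
  (isClopen_discrete S).preimage (continuous_pre n)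

lemma meas_pre (n : ℕ) (S : Set (Fin n → A)) : MeasurableSet (pre n ⁻¹' S) :=
  (isClopen_pre n S).isClosed.measurableSet

lemma continuous_measureReal {S : Set (ℕ → A)} (hS : IsClopen S) :
    Continuous fun μ : ProbabilityMeasure (ℕ → A) => (μ : Measure (ℕ → A)).real S := by
  rw [continuous_iff_continuousAt]
  intro μ
  have := ProbabilityMeasure.tendsto_measure_of_isClopen_of_tendsto (tendsto_id (x := 𝓝 μ)) hS
  exact (NNReal.continuous_coe.tendsto _).comp this

lemma continuous_pw (n : ℕ) (w : Fin n → A) :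
    Continuous fun μ : ProbabilityMeasure (ℕ → A) => pw n (μ : Measure (ℕ → A)) w :=
  continuous_measureReal (isClopen_pre n _)

lemma pw_nonneg (n : ℕ) (μ : Measure (ℕ → A)) (w : Fin n → A) : 0 ≤ pw n μ w := measureReal_nonneg

lemma real_pre_eq_sum (n : ℕ) (μ : Measure (ℕ → A)) [IsProbabilityMeasure μ]
    (S : Finset (Fin n → A)) : μ.real (pre n ⁻¹' (S : Set (Fin n → A))) = ∑ w ∈ S, pw n μ w := by
  unfold pw
  rw [← measureReal_biUnion_finset]
  · congr 1; ext x; simp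
  · intro a _ b _ hab
    exact Disjoint.preimage _ (by simpa using hab)
  · intro b _; exact meas_pre n _

lemma sum_pw (n : ℕ) (μ : Measure (ℕ → A)) [IsProbabilityMeasure μ] : ∑ w, pw n μ w = 1 := by
  rw [← real_pre_eq_sum]; simp

lemma pw_le_one (n : ℕ) (μ : Measure (ℕ → A)) [IsProbabilityMeasure μ] (w : Fin n → A) :
    pw n μ w ≤ 1 := measureReal_le_one

lemma measure_ext_cyl {μ ν : Measure (ℕ → A)} [IsProbabilityMeasure μ] [IsProbabilityMeasure ν]
    (h : ∀ n w, pw n μ w = pw n ν w) : μ = ν := by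
  refine ext_of_generate_finite (measurableCylinders (fun _ : ℕ => A))
    generateFrom_measurableCylinders.symm isPiSystem_measurableCylinders (fun s hs ↦ ?_) (by simp)
  rw [mem_measurableCylinders] at hs
  obtain ⟨t, S, hS, rfl⟩ := hs
  obtain ⟨N, hN⟩ : ∃ N, ∀ i ∈ t, i < N := ⟨t.sup id + 1, fun i hi =>
    Nat.lt_succ_of_le (Finset.le_sup (f := id) hi)⟩
  have : cylinder t S = pre N ⁻¹' (((Finset.univ.filter fun w : Fin N → A =>
      (fun i : t => w ⟨i, hN i i.2⟩) ∈ S) : Finset (Fin N → A)) : Set (Fin N → A)) := by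
    ext x
    simp only [cylinder, Set.mem_preimage, Finset.coe_filter, Finset.mem_univ, true_and,
      Set.mem_ofPred_eq, pre]
    rfl
  have h2 : μ.real (cylinder t S) = ν.real (cylinder t S) := by
    rw [this, real_pre_eq_sum, real_pre_eq_sum]
    exact Finset.sum_congr rfl fun w _ => h N w
  rw [measureReal_def, measureReal_def] at h2
  exact (ENNReal.toReal_eq_toReal_iff' (measure_ne_top _ _) (measure_ne_top _ _)).1 h2

/-- marginal on the first `n` coordinates -/
lemma marg_left (n m : ℕ) (μ : Measure (ℕ → A)) [IsProbabilityMeasure μ] (u : Fin n → A) :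
    ∑ v : Fin m → A, pw (n + m) μ (Fin.append u v) = pw n μ u := by
  have : pre n ⁻¹' {u} = pre (n + m) ⁻¹' (((Finset.univ.image fun v : Fin m → A => Fin.append u v) :
      Finset (Fin (n + m) → A)) : Set (Fin (n + m) → A)) := by
    ext x
    simp only [Set.mem_preimage, Set.mem_singleton_iff, Finset.coe_image, Finset.coe_univ,
      Set.image_univ, Set.mem_range]
    constructor
    · rintro rfl
      refine ⟨fun i => x (n + i), ?_⟩
      ext i
      refine Fin.addCases (fun j => ?_) (fun j => ?_) i <;> simp [pre]
    · rintro ⟨v, hv⟩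
      ext i
      have := congrFun hv (Fin.castAdd m i)
      simpa [pre] using this.symm
  rw [pw, this, real_pre_eq_sum, Finset.sum_image]
  intro a _ b _ hab
  ext i
  have := congrFun hab (Fin.natAdd n i)
  simpa using this

lemma inv_iter {μ : Measure (ℕ → A)} (hμ : μ.map shiftMap = μ) (n : ℕ) {S : Set (ℕ → A)}
    (hS : MeasurableSet S) : μ ((shiftMap^[n]) ⁻¹' S) = μ S := by
  have : MeasurePreserving (shiftMap (A := A)) μ μ := ⟨measurable_shift, hμ⟩
  exact (this.iterate n).measure_preimage hS.nullMeasurableSet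

lemma marg_right (n m : ℕ) (μ : Measure (ℕ → A)) [IsProbabilityMeasure μ]
    (hμ : μ.map shiftMap = μ) (v : Fin m → A) :
    ∑ u : Fin n → A, pw (n + m) μ (Fin.append u v) = pw m μ v := by
  have : (shiftMap^[n]) ⁻¹' (pre m ⁻¹' {v}) =
      pre (n + m) ⁻¹' (((Finset.univ.image fun u : Fin n → A => Fin.append u v) :
      Finset (Fin (n + m) → A)) : Set (Fin (n + m) → A)) := by
    ext x
    simp only [Set.mem_preimage, Set.mem_singleton_iff, Finset.coe_image, Finset.coe_univ,
      Set.image_univ, Set.mem_range]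
    constructor
    · rintro rfl
      refine ⟨fun i => x i, ?_⟩
      ext i
      refine Fin.addCases (fun j => ?_) (fun j => ?_) i <;> simp [pre, iter_shift]
    · rintro ⟨u, hu⟩
      ext i
      have := congrFun hu (Fin.natAdd n i)
      simpa [pre, iter_shift] using this.symm
  rw [pw, measureReal_def, ← inv_iter hμ n (meas_pre m _), ← measureReal_def, this,
    real_pre_eq_sum, Finset.sum_image]
  intro a _ b _ hab
  ext i
  have := congrFun hab (Fin.castAdd m i)
  simpa using this

/-- words of positive measure are in the language -/
lemma lang_of_pos {X : Set (ℕ → A)} {μ : Measure (ℕ → A)} [IsProbabilityMeasure μ]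
    (hXm : MeasurableSet X) (hμX : μ X = 1)
    {n : ℕ} {w : Fin n → A} (hw : 0 < pw n μ w) : Lang X (List.ofFn w) := by
  rw [Lang, cyl_ofFn]
  by_contra hne
  rw [Set.not_nonempty_iff_eq_empty] at hne
  have h1 : pre n ⁻¹' {w} ⊆ Xᶜ := fun x hx hxX => by
    have : x ∈ pre n ⁻¹' {w} ∩ X := ⟨hx, hxX⟩
    rw [hne] at this; exact this
  have h2 : μ Xᶜ = 0 := (prob_compl_eq_zero_iff hXm).2 hμX
  have := measure_mono_null h1 h2
  rw [pw, measureReal_def, this] at hw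
  simp at hw

lemma mw_eq {X : Set (ℕ → A)} {μ : Measure (ℕ → A)} [IsProbabilityMeasure μ]
    (hXm : MeasurableSet X) (hμX : μ X = 1) {n : ℕ} (w : Fin n → A) :
    mw X μ (List.ofFn w) = pw n μ w := by
  rw [mw, cyl_ofFn, pw, measureReal_def, measure_inter_conull]
  exact (prob_compl_eq_zero_iff hXm).2 hμX

end basics

open MeasureTheory Filter Topology
open scoped Classical ENNReal NNReal
set_option linter.unusedSectionVars false

lemma fekete_ereal {u : ℕ → ℝ} (hu : Subadditive u) :
    Tendsto (fun n : ℕ => ((u n / n : ℝ) : EReal)) atTop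
      (𝓝 (⨅ n : ℕ, ((u (n + 1) / ((n + 1 : ℕ) : ℝ) : ℝ) : EReal))) := by
  rw [tendsto_order]
  constructor
  · intro a ha
    filter_upwards [eventually_ge_atTop 1] with n hn
    refine lt_of_lt_of_le ha ?_
    obtain ⟨k, rfl⟩ : ∃ k, n = k + 1 := ⟨n - 1, by omega⟩
    exact iInf_le (fun n : ℕ => ((u (n + 1) / ((n + 1 : ℕ) : ℝ) : ℝ) : EReal)) k
  · intro a ha
    obtain ⟨n, hn⟩ := iInf_lt_iff.1 ha
    obtain ⟨r, hr1, hr2⟩ := EReal.lt_iff_exists_real_btwn.1 hn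
    have := hu.eventually_div_lt_of_div_lt (Nat.succ_ne_zero n) (EReal.coe_lt_coe_iff.1 hr1)
    filter_upwards [this] with p hp
    exact lt_trans (EReal.coe_lt_coe_iff.2 hp) hr2

lemma entropy_sub {α β : Type*} [Fintype α] [Fintype β] (p : α → β → ℝ) (hp : ∀ a b, 0 ≤ p a b)
    (h1 : ∑ a, ∑ b, p a b = 1) :
    ∑ a, ∑ b, Real.negMulLog (p a b) ≤ ∑ a, Real.negMulLog (∑ b, p a b) +
      ∑ b, Real.negMulLog (∑ a, p a b) := by
  set q : α → ℝ := fun a => ∑ b, p a b with hq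
  set r : β → ℝ := fun b => ∑ a, p a b with hr
  have hq0 : ∀ a, 0 ≤ q a := fun a => Finset.sum_nonneg fun b _ => hp a b
  have hr0 : ∀ b, 0 ≤ r b := fun b => Finset.sum_nonneg fun a _ => hp a b
  have key : ∀ a b, Real.negMulLog (p a b) ≤
      -(p a b * Real.log (q a)) - p a b * Real.log (r b) + (q a * r b - p a b) := by
    intro a b
    rcases (hp a b).eq_or_lt with h | h
    · rw [← h]; simp; exact mul_nonneg (hq0 a) (hr0 b)
    · have hqa : 0 < q a := lt_of_lt_of_le h (Finset.single_le_sum (fun b _ => hp a b) (Finset.mem_univ b))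
      have hrb : 0 < r b := lt_of_lt_of_le h
        (Finset.single_le_sum (f := fun a => p a b) (fun a _ => hp a b) (Finset.mem_univ a))
      have := Real.log_le_sub_one_of_pos (div_pos (mul_pos hqa hrb) h)
      rw [Real.log_div (mul_pos hqa hrb).ne' h.ne', Real.log_mul hqa.ne' hrb.ne'] at this
      have h2 := mul_le_mul_of_nonneg_left this h.le
      have h3 : p a b * (q a * r b / p a b - 1) = q a * r b - p a b := by field_simp
      rw [h3] at h2
      simp only [Real.negMulLog]
      linarith
  have e1 : ∑ a, ∑ b, p a b * Real.log (q a) = - ∑ a, Real.negMulLog (q a) := by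
    rw [← Finset.sum_neg_distrib]
    refine Finset.sum_congr rfl fun a _ => ?_
    rw [← Finset.sum_mul]; simp [Real.negMulLog, hq]
  have e2 : ∑ a, ∑ b, p a b * Real.log (r b) = - ∑ b, Real.negMulLog (r b) := by
    rw [Finset.sum_comm, ← Finset.sum_neg_distrib]
    refine Finset.sum_congr rfl fun b _ => ?_
    rw [← Finset.sum_mul]; simp [Real.negMulLog, hr]
  have e3 : ∑ a, ∑ b, q a * r b = 1 := by
    simp_rw [← Finset.mul_sum, ← Finset.sum_mul]
    rw [show ∑ a, q a = 1 from h1, show ∑ b, r b = 1 by rw [hr, Finset.sum_comm]; exact h1]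
    simp
  have := Finset.sum_le_sum fun a (_ : a ∈ Finset.univ) =>
    Finset.sum_le_sum fun b (_ : b ∈ Finset.univ) => key a b
  refine this.trans ?_
  simp only [Finset.sum_add_distrib, Finset.sum_sub_distrib, Finset.sum_neg_distrib]
  rw [e1, e2, e3, h1]
  linarith

lemma negMulLog_add_le {x y : ℝ} (hx : 0 ≤ x) (hy : 0 ≤ y) :
    Real.negMulLog (x + y) ≤ Real.negMulLog x + Real.negMulLog y := by
  rcases hx.eq_or_lt with rfl | hx
  · simp
  rcases hy.eq_or_lt with rfl | hy
  · simp
  have h1 := Real.log_le_log hx (show x ≤ x + y by linarith)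
  have h2 := Real.log_le_log hy (show y ≤ x + y by linarith)
  simp only [Real.negMulLog]
  nlinarith [mul_le_mul_of_nonneg_left h1 hx.le, mul_le_mul_of_nonneg_left h2 hy.le]

section ent
variable {A : Type} [Fintype A] [TopologicalSpace A] [DiscreteTopology A] [MeasurableSpace A] [BorelSpace A]

lemma sum_append {n m : ℕ} (f : (Fin (n + m) → A) → ℝ) :
    ∑ w, f w = ∑ u : Fin n → A, ∑ v : Fin m → A, f (Fin.append u v) := by
  rw [← (Fin.appendEquiv n m).sum_comp, Fintype.sum_prod_type]
  rfl

/-- block entropy -/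
noncomputable def Hn (μ : Measure (ℕ → A)) (n : ℕ) : ℝ := ∑ w, Real.negMulLog (pw n μ w)

lemma Hblock_eq {X : Set (ℕ → A)} {μ : Measure (ℕ → A)} [IsProbabilityMeasure μ]
    (hXm : MeasurableSet X) (hμX : μ X = 1) (n : ℕ) : Hblock X μ n = Hn μ n := by
  simp only [Hblock, Hn, mw_eq hXm hμX, Real.negMulLog, ← Finset.sum_neg_distrib, neg_mul]

lemma Hn_subadd {μ : Measure (ℕ → A)} [IsProbabilityMeasure μ] (hμ : μ.map shiftMap = μ) :
    Subadditive (Hn μ) := by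
  intro n m
  have := entropy_sub (fun (u : Fin n → A) (v : Fin m → A) => pw (n + m) μ (Fin.append u v))
    (fun _ _ => pw_nonneg _ _ _) (by rw [← sum_append (fun w => pw (n + m) μ w)]; exact sum_pw _ _)
  simp only [marg_left, marg_right n m μ hμ] at this
  rw [← sum_append (fun w => Real.negMulLog (pw (n + m) μ w))] at this
  exact this

lemma Hn_nonneg (μ : Measure (ℕ → A)) [IsProbabilityMeasure μ] (n : ℕ) : 0 ≤ Hn μ n :=
  Finset.sum_nonneg fun w _ => Real.negMulLog_nonneg (pw_nonneg _ _ _) (pw_le_one _ _ _)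

lemma Hn_cont (n : ℕ) : Continuous fun μ : ProbabilityMeasure (ℕ → A) => Hn (μ : Measure (ℕ → A)) n := by
  unfold Hn
  exact continuous_finset_sum _ fun w _ => Real.continuous_negMulLog.comp (continuous_pw n w)

lemma ent_tendsto {X : Set (ℕ → A)} {μ : Measure (ℕ → A)} [IsProbabilityMeasure μ]
    (hXm : MeasurableSet X) (hμX : μ X = 1) (hμ : μ.map shiftMap = μ) :
    Tendsto (fun n : ℕ => Hn μ n / n) atTop (𝓝 (ent X μ)) := by
  have hb : BddBelow (Set.range fun n : ℕ => Hn μ n / n) :=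
    ⟨0, by rintro _ ⟨n, rfl⟩; exact div_nonneg (Hn_nonneg μ n) (Nat.cast_nonneg n)⟩
  have := (Hn_subadd hμ).tendsto_lim hb
  have h2 : ent X μ = (Hn_subadd hμ).lim := by
    unfold ent
    simp only [Hblock_eq hXm hμX]
    exact this.liminf_eq
  rwa [h2]

lemma ent_eq_iInf {X : Set (ℕ → A)} {μ : Measure (ℕ → A)} [IsProbabilityMeasure μ]
    (hXm : MeasurableSet X) (hμX : μ X = 1) (hμ : μ.map shiftMap = μ) :
    ((ent X μ : ℝ) : EReal) = ⨅ n : ℕ, ((Hn μ (n + 1) / ((n + 1 : ℕ) : ℝ) : ℝ) : EReal) :=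
  tendsto_nhds_unique ((continuous_coe_real_ereal.tendsto _).comp (ent_tendsto hXm hμX hμ))
    (fekete_ereal (Hn_subadd hμ))

lemma pw_conv {μ μ₁ μ₂ : Measure (ℕ → A)} [IsProbabilityMeasure μ₁]
    [IsProbabilityMeasure μ₂] {t : ℝ} (h0 : 0 ≤ t) (h1 : t ≤ 1)
    (h : μ = ENNReal.ofReal t • μ₁ + ENNReal.ofReal (1 - t) • μ₂) (n : ℕ) (w : Fin n → A) :
    pw n μ w = t * pw n μ₁ w + (1 - t) * pw n μ₂ w := by
  unfold pw
  rw [h, measureReal_def, Measure.add_apply, Measure.smul_apply, Measure.smul_apply, smul_eq_mul,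
    smul_eq_mul, ENNReal.toReal_add (by finiteness) (by finiteness), ENNReal.toReal_mul,
    ENNReal.toReal_mul, ENNReal.toReal_ofReal h0, ENNReal.toReal_ofReal (by linarith)]
  rfl

lemma ent_affine {X : Set (ℕ → A)} (hXm : MeasurableSet X)
    {μ μ₁ μ₂ : Measure (ℕ → A)} [IsProbabilityMeasure μ] [IsProbabilityMeasure μ₁]
    [IsProbabilityMeasure μ₂] {t : ℝ} (h0 : 0 ≤ t) (h1 : t ≤ 1)
    (h : μ = ENNReal.ofReal t • μ₁ + ENNReal.ofReal (1 - t) • μ₂)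
    (hX : μ X = 1) (hX1 : μ₁ X = 1) (hX2 : μ₂ X = 1)
    (hi : μ.map shiftMap = μ) (hi1 : μ₁.map shiftMap = μ₁) (hi2 : μ₂.map shiftMap = μ₂) :
    ent X μ = t * ent X μ₁ + (1 - t) * ent X μ₂ := by
  have T := ent_tendsto hXm hX hi
  have T1 := ent_tendsto hXm hX1 hi1
  have T2 := ent_tendsto hXm hX2 hi2
  have T12 := (T1.const_mul t).add (T2.const_mul (1 - t))
  have T3 : Tendsto (fun n : ℕ => (Real.negMulLog t + Real.negMulLog (1 - t)) / (n : ℝ)) atTop (𝓝 0) :=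
    tendsto_const_nhds.div_atTop tendsto_natCast_atTop_atTop
  apply le_antisymm
  · have := le_of_tendsto_of_tendsto' T (T12.add T3) (fun n => ?_)
    · simpa using this
    · have : Hn μ n ≤ t * Hn μ₁ n + (1 - t) * Hn μ₂ n + (Real.negMulLog t + Real.negMulLog (1 - t)) := by
        have e : ∀ w, Real.negMulLog (pw n μ w) ≤
            (t * Real.negMulLog (pw n μ₁ w) + (1 - t) * Real.negMulLog (pw n μ₂ w)) +
            (pw n μ₁ w * Real.negMulLog t + pw n μ₂ w * Real.negMulLog (1 - t)) := by
          intro w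
          rw [pw_conv h0 h1 h]
          refine (negMulLog_add_le (mul_nonneg h0 (pw_nonneg _ _ _))
            (mul_nonneg (by linarith) (pw_nonneg _ _ _))).trans ?_
          rw [Real.negMulLog_mul, Real.negMulLog_mul]
          linarith
        refine (Finset.sum_le_sum fun w _ => e w).trans ?_
        simp only [Finset.sum_add_distrib, ← Finset.mul_sum, ← Finset.sum_mul, sum_pw, Hn, one_mul]
        exact le_rfl
      have := div_le_div_of_nonneg_right this (Nat.cast_nonneg (α := ℝ) n)
      refine this.trans (le_of_eq ?_)
      ring
  · refine le_of_tendsto_of_tendsto' T12 T (fun n => ?_)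
    have : t * Hn μ₁ n + (1 - t) * Hn μ₂ n ≤ Hn μ n := by
      simp only [Hn, Finset.mul_sum, ← Finset.sum_add_distrib]
      refine Finset.sum_le_sum fun w _ => ?_
      rw [pw_conv h0 h1 h]
      exact Real.concaveOn_negMulLog.2 (pw_nonneg _ _ _) (pw_nonneg _ _ _) h0 (by linarith) (by ring)
    have := div_le_div_of_nonneg_right this (Nat.cast_nonneg (α := ℝ) n)
    refine le_trans (le_of_eq ?_) this
    ring

end ent

open MeasureTheory Filter Topology
open scoped Classical ENNReal NNReal
set_option linter.unusedSectionVars false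
section pot
variable {A : Type} [Fintype A] [TopologicalSpace A] [DiscreteTopology A] [MeasurableSpace A] [BorelSpace A]

/-- real integral of the log potential -/
noncomputable def Ln (φ : List A → ℝ) (μ : Measure (ℕ → A)) (n : ℕ) : ℝ :=
  ∑ w : Fin n → A, pw n μ w * Real.log (φ (List.ofFn w))

/-- the potential vanishes on a positive measure set -/
def Bad (φ : List A → ℝ) (μ : Measure (ℕ → A)) (n : ℕ) : Prop :=
  ∃ w : Fin n → A, 0 < pw n μ w ∧ φ (List.ofFn w) ≤ 0

lemma lintegral_pre (μ : Measure (ℕ → A)) [IsProbabilityMeasure μ] (n : ℕ) (f : (Fin n → A) → ℝ≥0∞) :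
    ∫⁻ x, f (pre n x) ∂μ = ∑ w, f w * ENNReal.ofReal (pw n μ w) := by
  rw [← lintegral_map (f := f) (measurable_of_finite f) (measurable_pre n), lintegral_fintype]
  refine Finset.sum_congr rfl fun w _ => ?_
  rw [Measure.map_apply (measurable_pre n) (measurableSet_singleton w), pw, ofReal_measureReal]

lemma lintegral_pre_ofReal (μ : Measure (ℕ → A)) [IsProbabilityMeasure μ] (n : ℕ) (f : (Fin n → A) → ℝ) :
    ∑ w, ENNReal.ofReal (f w) * ENNReal.ofReal (pw n μ w) =
      ENNReal.ofReal (∑ w, max (f w) 0 * pw n μ w) := by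
  rw [ENNReal.ofReal_sum_of_nonneg]
  · refine Finset.sum_congr rfl fun w _ => ?_
    rw [ENNReal.ofReal_mul (le_max_right _ _)]
    congr 1
    simp [ENNReal.ofReal_max]
  · intro w _; exact mul_nonneg (le_max_right _ _) (pw_nonneg _ _ _)

lemma intlog_eq (φ : List A → ℝ) (μ : Measure (ℕ → A)) [IsProbabilityMeasure μ] (n : ℕ) :
    intlog μ (genPot φ n) = if Bad φ μ n then ⊥ else ((Ln φ μ n : ℝ) : EReal) := by
  have e1 : ∫⁻ x, ENNReal.ofReal (Real.log (genPot φ n x)) ∂μ =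
      ENNReal.ofReal (∑ w, max (Real.log (φ (List.ofFn w))) 0 * pw n μ w) := by
    rw [← lintegral_pre_ofReal]
    exact lintegral_pre μ n (fun w => ENNReal.ofReal (Real.log (φ (List.ofFn w))))
  have e2 : ∫⁻ x, (if genPot φ n x ≤ 0 then (⊤ : ℝ≥0∞) else ENNReal.ofReal (-Real.log (genPot φ n x))) ∂μ
      = ∑ w, (if φ (List.ofFn w) ≤ 0 then (⊤ : ℝ≥0∞) else ENNReal.ofReal (-Real.log (φ (List.ofFn w))))
        * ENNReal.ofReal (pw n μ w) :=
    lintegral_pre μ n (fun w => if φ (List.ofFn w) ≤ 0 then (⊤ : ℝ≥0∞) else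
      ENNReal.ofReal (-Real.log (φ (List.ofFn w))))
  unfold intlog
  rw [e1, e2]
  split_ifs with hb
  · obtain ⟨w, hw, hφw⟩ := hb
    have : (∑ w, (if φ (List.ofFn w) ≤ 0 then (⊤ : ℝ≥0∞) else ENNReal.ofReal (-Real.log (φ (List.ofFn w))))
        * ENNReal.ofReal (pw n μ w)) = ⊤ := by
      rw [ENNReal.sum_eq_top]
      refine ⟨w, Finset.mem_univ _, ?_⟩
      rw [if_pos hφw, ENNReal.top_mul]
      simpa using hw
    rw [this, EReal.coe_ennreal_top, EReal.sub_top]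
  · have : (∑ w, (if φ (List.ofFn w) ≤ 0 then (⊤ : ℝ≥0∞) else ENNReal.ofReal (-Real.log (φ (List.ofFn w))))
        * ENNReal.ofReal (pw n μ w)) =
        ENNReal.ofReal (∑ w, max (-Real.log (φ (List.ofFn w))) 0 * pw n μ w) := by
      rw [← lintegral_pre_ofReal]
      refine Finset.sum_congr rfl fun w _ => ?_
      split_ifs with h
      · have : pw n μ w = 0 := by
          by_contra hne
          exact hb ⟨w, lt_of_le_of_ne (pw_nonneg _ _ _) (Ne.symm hne), h⟩
        simp [this]
      · rfl
    rw [this, EReal.coe_ennreal_ofReal, EReal.coe_ennreal_ofReal,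
      max_eq_left (Finset.sum_nonneg fun w _ => mul_nonneg (le_max_right _ _) (pw_nonneg _ _ _)),
      max_eq_left (Finset.sum_nonneg fun w _ => mul_nonneg (le_max_right _ _) (pw_nonneg _ _ _)),
      ← EReal.coe_sub, ← Finset.sum_sub_distrib]
    congr 1
    refine Finset.sum_congr rfl fun w _ => ?_
    rw [← sub_mul, mul_comm]
    congr 1
    exact max_zero_sub_max_neg_zero_eq_self _

lemma Bad_mono {X : Set (ℕ → A)} (hXm : MeasurableSet X) {φ : List A → ℝ} (hφ : Submult X φ)
    {μ : Measure (ℕ → A)} [IsProbabilityMeasure μ] (hμX : μ X = 1) {n : ℕ} (hb : Bad φ μ n) (m : ℕ) :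
    Bad φ μ (n + m) := by
  obtain ⟨w, hw, hφw⟩ := hb
  obtain ⟨h0, -, c, hc, hs⟩ := hφ
  have hz : φ (List.ofFn w) = 0 := le_antisymm hφw (h0 _ (lang_of_pos hXm hμX hw))
  rw [← marg_left n m] at hw
  obtain ⟨v, -, hv⟩ : ∃ v ∈ Finset.univ, 0 < pw (n + m) μ (Fin.append w v) := by
    by_contra! hcon
    exact absurd hw (not_lt.2 (Finset.sum_nonpos hcon))
  refine ⟨_, hv, ?_⟩
  have hl := lang_of_pos hXm hμX hv
  rw [List.ofFn_fin_append] at hl ⊢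
  have := hs _ _ hl
  simpa [hz] using this

lemma Ln_sub {X : Set (ℕ → A)} (hXm : MeasurableSet X) {φ : List A → ℝ} {c : ℝ} (hc : 0 < c)
    (hs : ∀ I J : List A, Lang X (I ++ J) → φ (I ++ J) ≤ c⁻¹ * φ I * φ J)
    {μ : Measure (ℕ → A)} [IsProbabilityMeasure μ] (hμX : μ X = 1) (hμ : μ.map shiftMap = μ)
    (hb : ∀ n, ¬ Bad φ μ n) : Subadditive fun n => Ln φ μ n + Real.log c⁻¹ := by
  intro n m
  have pos : ∀ (k : ℕ) (w : Fin k → A), 0 < pw k μ w → 0 < φ (List.ofFn w) := by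
    intro k w hw
    by_contra hcon
    exact hb k ⟨w, hw, not_lt.1 hcon⟩
  have key : ∀ (u : Fin n → A) (v : Fin m → A),
      pw (n + m) μ (Fin.append u v) * Real.log (φ (List.ofFn (Fin.append u v))) ≤
      pw (n + m) μ (Fin.append u v) * Real.log c⁻¹ +
      pw (n + m) μ (Fin.append u v) * Real.log (φ (List.ofFn u)) +
      pw (n + m) μ (Fin.append u v) * Real.log (φ (List.ofFn v)) := by
    intro u v
    rcases (pw_nonneg (n + m) μ (Fin.append u v)).eq_or_lt with h | h
    · simp [← h]
    · have hu : 0 < pw n μ u := by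
        rw [← marg_left n m]
        exact lt_of_lt_of_le h (Finset.single_le_sum (f := fun v => pw (n + m) μ (Fin.append u v))
          (fun _ _ => pw_nonneg _ _ _) (Finset.mem_univ v))
      have hv : 0 < pw m μ v := by
        rw [← marg_right n m μ hμ]
        exact lt_of_lt_of_le h (Finset.single_le_sum (f := fun u => pw (n + m) μ (Fin.append u v))
          (fun _ _ => pw_nonneg _ _ _) (Finset.mem_univ u))
      have hu' := pos _ _ hu
      have hv' := pos _ _ hv
      have h' := pos _ _ h
      have hl := lang_of_pos hXm hμX h
      rw [List.ofFn_fin_append] at hl h' ⊢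
      have := Real.log_le_log h' (hs _ _ hl)
      rw [Real.log_mul (by positivity) hv'.ne', Real.log_mul (by positivity) hu'.ne'] at this
      have := mul_le_mul_of_nonneg_left this h.le
      linarith
  have S := Finset.sum_le_sum fun a (_ : a ∈ Finset.univ) =>
    Finset.sum_le_sum fun b (_ : b ∈ Finset.univ) => key a b
  simp only [Finset.sum_add_distrib] at S
  rw [← sum_append (fun w => pw (n + m) μ w * Real.log (φ (List.ofFn w))),
    ← sum_append (fun w => pw (n + m) μ w * Real.log c⁻¹), ← Finset.sum_mul, sum_pw] at S
  rw [Finset.sum_comm (f := fun u v => pw (n + m) μ (Fin.append u v) * Real.log (φ (List.ofFn v)))] at S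
  simp only [← Finset.sum_mul, marg_left, marg_right n m μ hμ] at S
  simp only [Ln]
  linarith

/-- terms whose infimum is `PhiStar` -/
noncomputable def bT (φ : List A → ℝ) (C : ℝ) (μ : Measure (ℕ → A)) (n : ℕ) : EReal :=
  if Bad φ μ (n + 1) then ⊥ else (((Ln φ μ (n + 1) + C) / ((n + 1 : ℕ) : ℝ) : ℝ) : EReal)

lemma bT_ne_top (φ : List A → ℝ) (C : ℝ) (μ : Measure (ℕ → A)) (n : ℕ) : bT φ C μ n ≠ ⊤ := by
  unfold bT; split_ifs <;> simp

lemma bT_usc (φ : List A → ℝ) (C : ℝ) (n : ℕ) :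
    UpperSemicontinuous fun μ : ProbabilityMeasure (ℕ → A) => bT φ C (μ : Measure (ℕ → A)) n := by
  intro μ r hr
  have hc : Continuous fun μ : ProbabilityMeasure (ℕ → A) =>
      (((Ln φ (μ : Measure (ℕ → A)) (n + 1) + C) / ((n + 1 : ℕ) : ℝ) : ℝ) : EReal) := by
    refine continuous_coe_real_ereal.comp ?_
    refine ((continuous_finsetSum _ fun w _ => ?_).add continuous_const).div_const _
    exact (continuous_pw _ w).mul continuous_const
  simp only [bT] at hr ⊢
  split_ifs at hr with hb
  · obtain ⟨w, hw, hφw⟩ := hb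
    filter_upwards [(continuous_pw _ w).continuousAt.eventually (lt_mem_nhds hw)] with η hη
    rw [if_pos ⟨w, hη, hφw⟩]; exact hr
  · filter_upwards [hc.continuousAt.eventually (gt_mem_nhds hr)] with η hη
    split_ifs
    · exact lt_of_le_of_lt bot_le hr
    · exact hη

lemma PhiStar_bot {X : Set (ℕ → A)} (hXm : MeasurableSet X) {φ : List A → ℝ} (hφ : Submult X φ)
    {μ : Measure (ℕ → A)} [IsProbabilityMeasure μ] (hμX : μ X = 1) {n : ℕ} (hb : Bad φ μ n) :
    PhiStar μ (genPot φ) = ⊥ := by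
  refine Tendsto.liminf_eq ?_
  refine (tendsto_congr' ?_).2 (tendsto_const_nhds (x := (⊥ : EReal)))
  filter_upwards [eventually_ge_atTop (n + 1)] with k hk
  have : Bad φ μ k := by
    obtain ⟨m, rfl⟩ := Nat.exists_eq_add_of_le (show n ≤ k by omega)
    exact Bad_mono hXm hφ hμX hb m
  rw [intlog_eq, if_pos this, EReal.coe_mul_bot_of_pos]
  have : (0 : ℝ) < k := by exact_mod_cast (by omega : 0 < k)
  positivity

lemma good_tendsto {X : Set (ℕ → A)} (hXm : MeasurableSet X) {φ : List A → ℝ} {c : ℝ} (hc : 0 < c)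
    (hs : ∀ I J : List A, Lang X (I ++ J) → φ (I ++ J) ≤ c⁻¹ * φ I * φ J)
    {μ : Measure (ℕ → A)} [IsProbabilityMeasure μ] (hμX : μ X = 1) (hμ : μ.map shiftMap = μ)
    (hb : ∀ n, ¬ Bad φ μ n) :
    Tendsto (fun n : ℕ => ((Ln φ μ n / n : ℝ) : EReal)) atTop (𝓝 (⨅ n, bT φ (Real.log c⁻¹) μ n)) := by
  have F := fekete_ereal (Ln_sub hXm hc hs hμX hμ hb)
  have e : (⨅ n : ℕ, (((Ln φ μ (n + 1) + Real.log c⁻¹) / ((n + 1 : ℕ) : ℝ) : ℝ) : EReal)) =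
      ⨅ n, bT φ (Real.log c⁻¹) μ n := by
    refine iInf_congr fun n => ?_
    rw [bT, if_neg (hb _)]
  rw [e] at F
  have T3 : Tendsto (fun n : ℕ => ((-Real.log c⁻¹ / (n : ℝ) : ℝ) : EReal)) atTop (𝓝 ((0 : ℝ) : EReal)) :=
    (continuous_coe_real_ereal.tendsto _).comp
      (tendsto_const_nhds.div_atTop tendsto_natCast_atTop_atTop)
  have := (EReal.continuousAt_add (p := (⨅ n, bT φ (Real.log c⁻¹) μ n, ((0 : ℝ) : EReal)))
    (Or.inr (EReal.coe_ne_bot 0)) (Or.inr (EReal.coe_ne_top 0))).tendsto.comp (F.prodMk_nhds T3)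
  simp only [EReal.coe_zero, add_zero] at this
  refine this.congr fun n => ?_
  simp only [Function.comp]
  rw [← EReal.coe_add]
  congr 1
  ring

lemma PhiStar_good {X : Set (ℕ → A)} (hXm : MeasurableSet X) {φ : List A → ℝ} {c : ℝ} (hc : 0 < c)
    (hs : ∀ I J : List A, Lang X (I ++ J) → φ (I ++ J) ≤ c⁻¹ * φ I * φ J)
    {μ : Measure (ℕ → A)} [IsProbabilityMeasure μ] (hμX : μ X = 1) (hμ : μ.map shiftMap = μ)
    (hb : ∀ n, ¬ Bad φ μ n) : PhiStar μ (genPot φ) = ⨅ n, bT φ (Real.log c⁻¹) μ n := by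
  refine Tendsto.liminf_eq ((good_tendsto hXm hc hs hμX hμ hb).congr fun n => ?_)
  rw [intlog_eq, if_neg (hb n), ← EReal.coe_mul]
  congr 1
  ring

lemma PhiStar_eq {X : Set (ℕ → A)} (hXm : MeasurableSet X) {φ : List A → ℝ} (hφ : Submult X φ)
    {c : ℝ} (hc : 0 < c)
    (hs : ∀ I J : List A, Lang X (I ++ J) → φ (I ++ J) ≤ c⁻¹ * φ I * φ J)
    {μ : Measure (ℕ → A)} [IsProbabilityMeasure μ] (hμX : μ X = 1) (hμ : μ.map shiftMap = μ) :
    PhiStar μ (genPot φ) = ⨅ n, bT φ (Real.log c⁻¹) μ n := by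
  by_cases hb : ∃ n, Bad φ μ n
  · obtain ⟨n, hn⟩ := hb
    rw [PhiStar_bot hXm hφ hμX hn, eq_comm, eq_bot_iff]
    refine (iInf_le _ n).trans ?_
    rw [bT, if_pos (Bad_mono hXm hφ hμX hn 1)]
  · push Not at hb
    exact PhiStar_good hXm hc hs hμX hμ hb

lemma PhiStar_ne_top {X : Set (ℕ → A)} (hXm : MeasurableSet X) {φ : List A → ℝ} (hφ : Submult X φ)
    {μ : Measure (ℕ → A)} [IsProbabilityMeasure μ] (hμX : μ X = 1) (hμ : μ.map shiftMap = μ) :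
    PhiStar μ (genPot φ) ≠ ⊤ := by
  obtain ⟨c, hc, hs⟩ := hφ.2.2
  rw [PhiStar_eq hXm hφ hc hs hμX hμ]
  exact ne_top_of_le_ne_top (bT_ne_top φ _ μ 0) (iInf_le _ 0)

lemma PhiStar_affine {X : Set (ℕ → A)} (hXm : MeasurableSet X) {φ : List A → ℝ} (hφ : Submult X φ)
    {μ μ₁ μ₂ : Measure (ℕ → A)} [IsProbabilityMeasure μ] [IsProbabilityMeasure μ₁]
    [IsProbabilityMeasure μ₂] {t : ℝ} (h0 : 0 < t) (h1 : t < 1)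
    (h : μ = ENNReal.ofReal t • μ₁ + ENNReal.ofReal (1 - t) • μ₂)
    (hX : μ X = 1) (hX1 : μ₁ X = 1) (hX2 : μ₂ X = 1)
    (hi : μ.map shiftMap = μ) (hi1 : μ₁.map shiftMap = μ₁) (hi2 : μ₂.map shiftMap = μ₂) :
    PhiStar μ (genPot φ) = (t : EReal) * PhiStar μ₁ (genPot φ) +
      ((1 - t : ℝ) : EReal) * PhiStar μ₂ (genPot φ) := by
  have h1' : 0 < 1 - t := by linarith
  have hB : ∀ n, Bad φ μ n ↔ Bad φ μ₁ n ∨ Bad φ μ₂ n := by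
    intro n
    have hp := pw_conv h0.le h1.le h n
    constructor
    · rintro ⟨w, hw, hφw⟩
      by_contra! hcon
      have a1 : pw n μ₁ w = 0 := by
        by_contra hne
        exact hcon.1 ⟨w, lt_of_le_of_ne (pw_nonneg _ _ _) (Ne.symm hne), hφw⟩
      have a2 : pw n μ₂ w = 0 := by
        by_contra hne
        exact hcon.2 ⟨w, lt_of_le_of_ne (pw_nonneg _ _ _) (Ne.symm hne), hφw⟩
      rw [hp, a1, a2] at hw
      simp at hw
    · rintro (⟨w, hw, hφw⟩ | ⟨w, hw, hφw⟩)
      · refine ⟨w, ?_, hφw⟩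
        rw [hp]
        have := pw_nonneg n μ₂ w
        positivity
      · refine ⟨w, ?_, hφw⟩
        rw [hp]
        have := pw_nonneg n μ₁ w
        positivity
  by_cases hb : ∃ n, Bad φ μ n
  · obtain ⟨n, hn⟩ := hb
    rw [PhiStar_bot hXm hφ hX hn]
    rcases (hB n).1 hn with hn | hn
    · rw [PhiStar_bot hXm hφ hX1 hn, EReal.coe_mul_bot_of_pos h0, EReal.bot_add]
    · rw [PhiStar_bot hXm hφ hX2 hn, EReal.coe_mul_bot_of_pos h1', EReal.add_bot]
  · push Not at hb
    have hb1 : ∀ n, ¬ Bad φ μ₁ n := fun n hn => hb n ((hB n).2 (Or.inl hn))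
    have hb2 : ∀ n, ¬ Bad φ μ₂ n := fun n hn => hb n ((hB n).2 (Or.inr hn))
    have n1 := PhiStar_ne_top hXm hφ hX1 hi1
    have n2 := PhiStar_ne_top hXm hφ hX2 hi2
    obtain ⟨c, hc, hs⟩ := hφ.2.2
    have T := good_tendsto hXm hc hs hX hi hb
    have T1 := good_tendsto hXm hc hs hX1 hi1 hb1
    have T2 := good_tendsto hXm hc hs hX2 hi2 hb2
    rw [← PhiStar_good hXm hc hs hX hi hb] at T
    rw [← PhiStar_good hXm hc hs hX1 hi1 hb1] at T1
    rw [← PhiStar_good hXm hc hs hX2 hi2 hb2] at T2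
    have S1 := EReal.Tendsto.const_mul (a := (t : EReal)) T1 (Or.inl (EReal.coe_ne_bot _)) (Or.inl (EReal.coe_ne_top _))
    have S2 := EReal.Tendsto.const_mul (a := ((1 - t : ℝ) : EReal)) T2
      (Or.inl (EReal.coe_ne_bot _)) (Or.inl (EReal.coe_ne_top _))
    have m1 : (t : EReal) * PhiStar μ₁ (genPot φ) ≠ ⊤ := by
      generalize PhiStar μ₁ (genPot φ) = y at n1
      induction y with
      | bot => rw [EReal.coe_mul_bot_of_pos h0]; simp
      | coe y => rw [← EReal.coe_mul]; exact EReal.coe_ne_top _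
      | top => simp at n1
    have m2 : ((1 - t : ℝ) : EReal) * PhiStar μ₂ (genPot φ) ≠ ⊤ := by
      generalize PhiStar μ₂ (genPot φ) = y at n2
      induction y with
      | bot => rw [EReal.coe_mul_bot_of_pos h1']; simp
      | coe y => rw [← EReal.coe_mul]; exact EReal.coe_ne_top _
      | top => simp at n2
    have S := (EReal.continuousAt_add (p := ((t : EReal) * PhiStar μ₁ (genPot φ),
      ((1 - t : ℝ) : EReal) * PhiStar μ₂ (genPot φ))) (Or.inl m1) (Or.inr m2)).tendsto.comp (S1.prodMk_nhds S2)
    refine tendsto_nhds_unique T (S.congr fun n => ?_)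
    simp only [Function.comp]
    rw [← EReal.coe_mul, ← EReal.coe_mul, ← EReal.coe_add]
    congr 1
    simp only [Ln, pw_conv h0.le h1.le h n, add_mul, Finset.sum_add_distrib, mul_assoc, ← Finset.mul_sum]
    ring

end pot

open MeasureTheory Filter Topology
open scoped Classical ENNReal NNReal
set_option linter.unusedSectionVars false

section lift
variable {A B : Type}
    [Fintype A] [TopologicalSpace A] [DiscreteTopology A] [MeasurableSpace A] [BorelSpace A]
    [Fintype B] [TopologicalSpace B] [DiscreteTopology B] [MeasurableSpace B] [BorelSpace B]

lemma continuous_block (π : A → B) : Continuous (blockMap π) := by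
  have : Continuous π := continuous_of_discreteTopology
  unfold blockMap; fun_prop

lemma measurable_block (π : A → B) : Measurable (blockMap π) := (continuous_block π).measurable

lemma closed_X {X : Set (ℕ → A)} (hX : IsClosed X) :
    IsClosed {μ : ProbabilityMeasure (ℕ → A) | (μ : Measure (ℕ → A)) X = 1} := by
  rw [isClosed_iff_ultrafilter]
  intro μ u hu hs
  have h := ProbabilityMeasure.limsup_measure_closed_le_of_tendsto (μs := id) (L := (u : Filter _)) (μ := μ) (tendsto_id'.2 hu) hX
  have e : (fun i : ProbabilityMeasure (ℕ → A) => ((id i : ProbabilityMeasure (ℕ → A)) : Measure (ℕ → A)) X)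
      =ᶠ[(u : Filter _)] fun _ => 1 := hs
  rw [limsup_congr e, limsup_const] at h
  exact le_antisymm prob_le_one h

lemma closed_inv : IsClosed {μ : ProbabilityMeasure (ℕ → A) |
    (μ : Measure (ℕ → A)).map shiftMap = (μ : Measure (ℕ → A))} := by
  have h := ProbabilityMeasure.continuous_map (continuous_shift (A := A))
  have := isClosed_eq h continuous_id
  convert this using 1
  ext μ
  simp only [Set.mem_ofPred_eq, id]
  exact ⟨fun h => Subtype.ext h, fun h => congrArg Subtype.val h⟩

lemma closed_push (π : A → B) (ν : ProbabilityMeasure (ℕ → B)) :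
    IsClosed {μ : ProbabilityMeasure (ℕ → A) | pushM π μ = (ν : Measure (ℕ → B))} := by
  have h := ProbabilityMeasure.continuous_map (continuous_block π)
  have := isClosed_eq h (continuous_const (y := ν))
  convert this using 1
  ext μ
  simp only [Set.mem_ofPred_eq]
  exact ⟨fun h => Subtype.ext h, fun h => congrArg Subtype.val h⟩

lemma compact_K {X : Set (ℕ → A)} (hX : IsClosed X) (π : A → B) (ν : ProbabilityMeasure (ℕ → B)) :
    IsCompact {μ : ProbabilityMeasure (ℕ → A) | μ ∈ MInv X ∧ pushM π μ = (ν : Measure (ℕ → B))} :=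
  ((closed_inv.inter (closed_X hX)).inter (closed_push π ν)).isCompact

lemma usc_eqVal {X : Set (ℕ → A)} (hX : IsClosed X) {φ : List A → ℝ} (hφ : Submult X φ) :
    UpperSemicontinuousOn (eqVal X (genPot φ)) (MInv X) := by
  obtain ⟨c, hc, hs⟩ := hφ.2.2
  have hXm := hX.measurableSet
  have e : ∀ μ ∈ MInv X, eqVal X (genPot φ) μ = (⨅ n, bT φ (Real.log c⁻¹) (μ : Measure (ℕ → A)) n) +
      ⨅ n : ℕ, ((Hn (μ : Measure (ℕ → A)) (n + 1) / ((n + 1 : ℕ) : ℝ) : ℝ) : EReal) := by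
    intro μ hμ
    rw [eqVal, PhiStar_eq hXm hφ hc hs hμ.2 hμ.1, ent_eq_iInf hXm hμ.2 hμ.1]
  have u : UpperSemicontinuousOn (fun μ : ProbabilityMeasure (ℕ → A) =>
      (⨅ n, bT φ (Real.log c⁻¹) (μ : Measure (ℕ → A)) n) +
      ⨅ n : ℕ, ((Hn (μ : Measure (ℕ → A)) (n + 1) / ((n + 1 : ℕ) : ℝ) : ℝ) : EReal)) (MInv X) := by
    refine UpperSemicontinuousOn.add' ?_ ?_ ?_
    · intro μ _
      exact upperSemicontinuousWithinAt_iInf fun n => (bT_usc φ _ n).upperSemicontinuousWithinAt _ μ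
    · intro μ _
      refine upperSemicontinuousWithinAt_iInf fun n => ?_
      refine Continuous.upperSemicontinuous ?_ |>.upperSemicontinuousWithinAt _ μ
      exact continuous_coe_real_ereal.comp ((Hn_cont (n + 1)).div_const _)
    · intro μ hμ
      rw [← ent_eq_iInf hXm hμ.2 hμ.1]
      exact EReal.continuousAt_add (Or.inr (EReal.coe_ne_bot _)) (Or.inr (EReal.coe_ne_top _))
  intro μ hμ y hy
  rw [e μ hμ] at hy
  filter_upwards [u μ hμ y hy, self_mem_nhdsWithin] with η h1 h2
  rwa [e η h2]

lemma eqVal_ne_top {X : Set (ℕ → A)} (hXm : MeasurableSet X) {φ : List A → ℝ} (hφ : Submult X φ)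
    {μ : ProbabilityMeasure (ℕ → A)} (hμ : μ ∈ MInv X) : eqVal X (genPot φ) μ ≠ ⊤ := by
  rw [eqVal]
  exact EReal.add_ne_top (PhiStar_ne_top hXm hφ hμ.2 hμ.1) (EReal.coe_ne_top _)

lemma eqVal_affine {X : Set (ℕ → A)} (hXm : MeasurableSet X) {φ : List A → ℝ} (hφ : Submult X φ)
    {μ μ₁ μ₂ : ProbabilityMeasure (ℕ → A)} (hμ : μ ∈ MInv X) (hμ₁ : μ₁ ∈ MInv X) (hμ₂ : μ₂ ∈ MInv X)
    {t : ℝ} (h0 : 0 < t) (h1 : t < 1)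
    (h : (μ : Measure (ℕ → A)) = ENNReal.ofReal t • (μ₁ : Measure (ℕ → A)) +
      ENNReal.ofReal (1 - t) • (μ₂ : Measure (ℕ → A))) :
    eqVal X (genPot φ) μ = (t : EReal) * eqVal X (genPot φ) μ₁ +
      ((1 - t : ℝ) : EReal) * eqVal X (genPot φ) μ₂ := by
  have h1' : 0 < 1 - t := by linarith
  simp only [eqVal]
  rw [PhiStar_affine hXm hφ h0 h1 h hμ.2 hμ₁.2 hμ₂.2 hμ.1 hμ₁.1 hμ₂.1,
    ent_affine hXm h0.le h1.le h hμ.2 hμ₁.2 hμ₂.2 hμ.1 hμ₁.1 hμ₂.1]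
  have n1 := PhiStar_ne_top hXm hφ hμ₁.2 hμ₁.1
  have n2 := PhiStar_ne_top hXm hφ hμ₂.2 hμ₂.1
  generalize PhiStar (μ₁ : Measure (ℕ → A)) (genPot φ) = y at *
  generalize PhiStar (μ₂ : Measure (ℕ → A)) (genPot φ) = z at *
  induction y with
  | top => simp at n1
  | bot => simp [EReal.coe_mul_bot_of_pos h0]
  | coe y =>
    induction z with
    | top => simp at n2
    | bot => 
      rw [EReal.coe_mul_bot_of_pos h1', EReal.bot_add, EReal.coe_mul_bot_of_pos h1', EReal.add_bot, EReal.add_bot, EReal.bot_add]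
    | coe z => norm_cast; ring

lemma MInv_conv {X : Set (ℕ → A)} {μ μ₁ μ₂ : ProbabilityMeasure (ℕ → A)}
    (hμ₁ : μ₁ ∈ MInv X) (hμ₂ : μ₂ ∈ MInv X) {t : ℝ} (h0 : 0 ≤ t) (h1 : t ≤ 1)
    (h : (μ : Measure (ℕ → A)) = ENNReal.ofReal t • (μ₁ : Measure (ℕ → A)) +
      ENNReal.ofReal (1 - t) • (μ₂ : Measure (ℕ → A))) : μ ∈ MInv X := by
  constructor
  · rw [h, Measure.map_add _ _ measurable_shift, Measure.map_smul, Measure.map_smul, hμ₁.1, hμ₂.1]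
  · rw [h, Measure.add_apply, Measure.smul_apply, Measure.smul_apply, hμ₁.2, hμ₂.2, smul_eq_mul,
      smul_eq_mul, mul_one, mul_one, ← ENNReal.ofReal_add h0 (by linarith)]
    simp

lemma push_conv {π : A → B} {ν : ProbabilityMeasure (ℕ → B)} {μ μ₁ μ₂ : ProbabilityMeasure (ℕ → A)}
    (hμ₁ : pushM π μ₁ = (ν : Measure (ℕ → B))) (hμ₂ : pushM π μ₂ = (ν : Measure (ℕ → B)))
    {t : ℝ} (h0 : 0 ≤ t) (h1 : t ≤ 1)
    (h : (μ : Measure (ℕ → A)) = ENNReal.ofReal t • (μ₁ : Measure (ℕ → A)) +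
      ENNReal.ofReal (1 - t) • (μ₂ : Measure (ℕ → A))) : pushM π μ = (ν : Measure (ℕ → B)) := by
  unfold pushM at *
  rw [h, Measure.map_add _ _ (measurable_block π), Measure.map_smul, Measure.map_smul, hμ₁, hμ₂,
    ← add_smul, ← ENNReal.ofReal_add h0 (by linarith)]
  simp

end lift

open MeasureTheory Filter Topology
open scoped Classical ENNReal NNReal
set_option linter.unusedSectionVars false

section lift2
variable {A B : Type}
    [Fintype A] [TopologicalSpace A] [DiscreteTopology A] [MeasurableSpace A] [BorelSpace A]
    [Fintype B] [TopologicalSpace B] [DiscreteTopology B] [MeasurableSpace B] [BorelSpace B]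

lemma exists_avg {X : Set (ℕ → A)} (hXm : MeasurableSet X) (hXs : shiftMap '' X ⊆ X)
    (m : Measure (ℕ → A)) [IsProbabilityMeasure m] (hm : m X = 1) (N : ℕ) (hN : 0 < N) :
    ∃ η : ProbabilityMeasure (ℕ → A), (η : Measure (ℕ → A)) X = 1 ∧ ∀ S, MeasurableSet S →
      (η : Measure (ℕ → A)).real S = (N : ℝ)⁻¹ * ∑ i ∈ Finset.range N, m.real ((shiftMap^[i]) ⁻¹' S) := by
  set η : Measure (ℕ → A) := (N : ℝ≥0∞)⁻¹ • ∑ i ∈ Finset.range N, m.map (shiftMap^[i]) with hη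
  have happ : ∀ S, MeasurableSet S → η S = (N : ℝ≥0∞)⁻¹ * ∑ i ∈ Finset.range N, m ((shiftMap^[i]) ⁻¹' S) := by
    intro S hS
    rw [hη, Measure.smul_apply, Measure.finset_sum_apply, smul_eq_mul]
    congr 1
    refine Finset.sum_congr rfl fun i _ => ?_
    rw [Measure.map_apply (measurable_shift.iterate i) hS]
  have hN0 : (N : ℝ≥0∞) ≠ 0 := by exact_mod_cast hN.ne'
  have hone : ∀ S, MeasurableSet S → (∀ i, m ((shiftMap^[i]) ⁻¹' S) = 1) → η S = 1 := by
    intro S hS h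
    rw [happ S hS]
    simp only [h, Finset.sum_const, Finset.card_range, nsmul_eq_mul, mul_one]
    exact ENNReal.inv_mul_cancel hN0 (ENNReal.natCast_ne_top N)
  have hp : IsProbabilityMeasure η := ⟨hone _ MeasurableSet.univ (by simp)⟩
  have hmaps : ∀ i, ∀ x ∈ X, (shiftMap^[i]) x ∈ X := by
    intro i
    exact (Set.MapsTo.iterate (f := shiftMap) (fun x hx => hXs ⟨x, hx, rfl⟩) i)
  refine ⟨⟨η, hp⟩, hone X hXm fun i => ?_, fun S hS => ?_⟩
  · refine le_antisymm prob_le_one ?_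
    rw [← hm]
    exact measure_mono (hmaps i)
  · change η.real S = _
    rw [measureReal_def, happ S hS, ENNReal.toReal_mul, ENNReal.toReal_sum (by finiteness)]
    simp [measureReal_def]

lemma exists_section {X : Set (ℕ → A)} {Y : Set (ℕ → B)} (hX : IsSubshift X) (hXm : MeasurableSet X)
    (hYm : MeasurableSet Y)
    (π : A → B) (hπ : blockMap π '' X = Y)
    (ν : Measure (ℕ → B)) [IsProbabilityMeasure ν] (hν : ν.map shiftMap = ν) (hνY : ν Y = 1) (n : ℕ) :
    ∃ m : Measure (ℕ → A), IsProbabilityMeasure m ∧ m X = 1 ∧ ∀ i k, i + k ≤ n → ∀ w : Fin k → B,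
      m.real ((shiftMap^[i]) ⁻¹' (blockMap π ⁻¹' (pre k ⁻¹' {w}))) = pw k ν w := by
  obtain ⟨x0, hx0⟩ := hX.1
  have hg : ∀ w : Fin n → B, ∃ x ∈ X, (∃ x' ∈ X, pre n (blockMap π x') = w) → pre n (blockMap π x) = w := by
    intro w
    by_cases h : ∃ x' ∈ X, pre n (blockMap π x') = w
    · obtain ⟨x, hx, hw⟩ := h
      exact ⟨x, hx, fun _ => hw⟩
    · exact ⟨x0, hx0, fun h' => absurd h' h⟩
  choose g hgX hg using hg
  have hmeas : Measurable fun y : ℕ → B => g (pre n y) := (measurable_of_finite g).comp (measurable_pre n)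
  refine ⟨ν.map fun y => g (pre n y), Measure.isProbabilityMeasure_map hmeas.aemeasurable, ?_, ?_⟩
  · rw [Measure.map_apply hmeas hXm]
    have : (fun y => g (pre n y)) ⁻¹' X = Set.univ := by
      ext y; simp [hgX]
    rw [this]; simp
  · intro i k hik w
    have hS : MeasurableSet ((shiftMap^[i]) ⁻¹' (blockMap π ⁻¹' (pre k ⁻¹' {w}))) :=
      (measurable_shift.iterate i) (measurable_block π (meas_pre k _))
    rw [measureReal_def, Measure.map_apply hmeas hS, pw, measureReal_def, ← inv_iter hν i (meas_pre k _)]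
    congr 1
    refine measure_congr ?_
    have hae : ∀ᵐ y ∂ν, y ∈ Y := by
      rw [ae_iff]; exact (prob_compl_eq_zero_iff hYm).2 hνY
    filter_upwards [hae] with y hy
    rw [← hπ] at hy
    obtain ⟨x, hx, rfl⟩ := hy
    have h := hg (pre n (blockMap π x)) ⟨x, hx, rfl⟩
    apply propext
    change pre k (blockMap π ((shiftMap^[i]) (g (pre n (blockMap π x))))) = w ↔
      pre k ((shiftMap^[i]) (blockMap π x)) = w
    have : pre k (blockMap π ((shiftMap^[i]) (g (pre n (blockMap π x))))) =
      pre k ((shiftMap^[i]) (blockMap π x)) := by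
      ext j
      have := congrFun h ⟨i + j, by omega⟩
      simp only [pre, blockMap] at this
      simp only [pre, blockMap, iter_shift]
      exact this
    rw [this]

lemma exists_lift {X : Set (ℕ → A)} {Y : Set (ℕ → B)} (hX : IsSubshift X) (hY : IsSubshift Y)
    (π : A → B) (hπ : blockMap π '' X = Y)
    (ν : ProbabilityMeasure (ℕ → B)) (hν : ν ∈ MInv Y) :
    ∃ μ : ProbabilityMeasure (ℕ → A), μ ∈ MInv X ∧ pushM π μ = (ν : Measure (ℕ → B)) := by
  have hXc : IsClosed X := hX.2.1.isClosed
  have hXm := hXc.measurableSet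
  have hYm := hY.2.1.isClosed.measurableSet
  have H : ∀ n : ℕ, ∃ η : ProbabilityMeasure (ℕ → A), (η : Measure (ℕ → A)) X = 1 ∧
      (∀ k ≤ n, ∀ w : Fin k → B, (η : Measure (ℕ → A)).real (blockMap π ⁻¹' (pre k ⁻¹' {w})) =
        pw k (ν : Measure (ℕ → B)) w) ∧
      ∀ S, MeasurableSet S → |(η : Measure (ℕ → A)).real (shiftMap ⁻¹' S) -
        (η : Measure (ℕ → A)).real S| ≤ ((n + 1 : ℕ) : ℝ)⁻¹ := by
    intro n
    obtain ⟨m, hm, hmX, hmc⟩ := exists_section hX hXm hYm π hπ (ν : Measure (ℕ → B)) hν.1 hν.2 (2 * (n + 1))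
    obtain ⟨η, hηX, hη⟩ := exists_avg hXm hX.2.2 m hmX (n + 1) (Nat.succ_pos n)
    refine ⟨η, hηX, fun k hk w => ?_, fun S hS => ?_⟩
    · rw [hη _ (measurable_block π (meas_pre k _)), Finset.sum_congr rfl (g := fun _ => pw k (ν : Measure (ℕ → B)) w)]
      · simp only [Finset.sum_const, Finset.card_range, nsmul_eq_mul]
        rw [← mul_assoc, inv_mul_cancel₀ (by positivity), one_mul]
      · intro i hi
        rw [Finset.mem_range] at hi
        exact hmc i k (by omega) w
    · rw [hη _ hS, hη _ (measurable_shift hS), ← mul_sub, ← Finset.sum_sub_distrib]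
      have : ∀ i, m.real ((shiftMap^[i]) ⁻¹' (shiftMap ⁻¹' S)) = m.real ((shiftMap^[i+1]) ⁻¹' S) := by
        intro i
        rw [Function.iterate_succ', Set.preimage_comp]
      simp only [this]
      rw [Finset.sum_range_sub (fun i => m.real ((shiftMap^[i]) ⁻¹' S)), abs_mul, abs_of_nonneg (by positivity)]
      refine mul_le_of_le_one_right (by positivity) ?_
      rw [abs_le]
      have a1 := measureReal_le_one (μ := m) (s := (shiftMap^[n + 1]) ⁻¹' S)
      have a2 := measureReal_le_one (μ := m) (s := (shiftMap^[0]) ⁻¹' S)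
      have a3 := measureReal_nonneg (μ := m) (s := (shiftMap^[n + 1]) ⁻¹' S)
      have a4 := measureReal_nonneg (μ := m) (s := (shiftMap^[0]) ⁻¹' S)
      constructor <;> linarith
  choose η hηX hηπ hηs using H
  set u : Ultrafilter ℕ := Ultrafilter.of atTop
  have hu : (u : Filter ℕ) ≤ atTop := Ultrafilter.of_le _
  obtain ⟨μ, -, hμ⟩ := isCompact_univ.ultrafilter_le_nhds (u.map η) (by simp)
  have hT : Tendsto η u (𝓝 μ) := hμ
  have hTS : ∀ S : Set (ℕ → A), IsClopen S → Tendsto (fun n => (η n : Measure (ℕ → A)).real S) u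
      (𝓝 ((μ : Measure (ℕ → A)).real S)) := fun S hS => (continuous_measureReal hS).continuousAt.tendsto.comp hT
  refine ⟨μ, ⟨?_, ?_⟩, ?_⟩
  · have : IsProbabilityMeasure ((μ : Measure (ℕ → A)).map shiftMap) :=
      Measure.isProbabilityMeasure_map measurable_shift.aemeasurable
    refine measure_ext_cyl fun k w => ?_
    have h1 := hTS _ (isClopen_pre k {w})
    have h2 := hTS _ ((isClopen_pre k {w}).preimage continuous_shift)
    have h3 : Tendsto (fun n => (η n : Measure (ℕ → A)).real (shiftMap ⁻¹' (pre k ⁻¹' {w})) -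
        (η n : Measure (ℕ → A)).real (pre k ⁻¹' {w})) u (𝓝 0) := by
      refine squeeze_zero_norm (fun n => hηs n _ (meas_pre k _)) ?_
      have : Tendsto (fun n : ℕ => ((n + 1 : ℕ) : ℝ)⁻¹) atTop (𝓝 0) :=
        (tendsto_inv_atTop_zero.comp tendsto_natCast_atTop_atTop).comp (tendsto_add_atTop_nat 1)
      exact this.mono_left hu
    have h4 := tendsto_nhds_unique (h2.sub h1) h3
    rw [pw, pw, measureReal_def, Measure.map_apply measurable_shift (meas_pre k _), ← measureReal_def]
    linarith
  · exact (closed_X hXc).mem_of_tendsto hT (Eventually.of_forall hηX)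
  · have : IsProbabilityMeasure (pushM π μ) :=
      Measure.isProbabilityMeasure_map (measurable_block π).aemeasurable
    refine measure_ext_cyl fun k w => ?_
    have h2 := hTS _ ((isClopen_pre k {w}).preimage (continuous_block π))
    have h3 : Tendsto (fun n => (η n : Measure (ℕ → A)).real (blockMap π ⁻¹' (pre k ⁻¹' {w}))) u
        (𝓝 (pw k (ν : Measure (ℕ → B)) w)) := by
      refine tendsto_const_nhds.congr' ?_
      filter_upwards [hu (eventually_ge_atTop k)] with n hn
      exact (hηπ n k hn w).symm
    rw [← tendsto_nhds_unique h2 h3, pw, pushM, measureReal_def,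
      Measure.map_apply (measurable_block π) (meas_pre k _), ← measureReal_def]

end lift2

lemma ereal_conv_eq {t : ℝ} (h0 : 0 < t) (h1 : t < 1) {s : EReal} (hs : s ≠ ⊤) :
    (t : EReal) * s + ((1 - t : ℝ) : EReal) * s = s := by
  induction s with
  | top => simp at hs
  | bot => rw [EReal.coe_mul_bot_of_pos h0, EReal.bot_add]
  | coe s => norm_cast; ring

lemma ereal_conv_max {t : ℝ} (h0 : 0 < t) (h1 : t < 1) {s x y : EReal} (hs : s ≠ ⊤)
    (hx : x ≤ s) (hy : y ≤ s) (h : s = (t : EReal) * x + ((1 - t : ℝ) : EReal) * y) :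
    x = s ∧ y = s := by
  have h1' : 0 < 1 - t := by linarith
  induction s with
  | top => simp at hs
  | bot => exact ⟨le_bot_iff.1 hx, le_bot_iff.1 hy⟩
  | coe s =>
    induction x with
    | top => simp at hx
    | bot => rw [EReal.coe_mul_bot_of_pos h0, EReal.bot_add] at h; simp at h
    | coe x =>
      induction y with
      | top => simp at hy
      | bot => rw [EReal.coe_mul_bot_of_pos h1', EReal.add_bot] at h; simp at h
      | coe y =>
        norm_cast at *
        constructor <;> nlinarith


open MeasureTheory Filter Topology
open scoped Classical ENNReal NNReal
set_option linter.unusedSectionVars false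

section mainlem
variable {A B : Type}
    [Fintype A] [TopologicalSpace A] [DiscreteTopology A] [MeasurableSpace A] [BorelSpace A]
    [Fintype B] [TopologicalSpace B] [DiscreteTopology B] [MeasurableSpace B] [BorelSpace B]

lemma comp_mem_K {X : Set (ℕ → A)} (hXm : MeasurableSet X) (π : A → B)
    (ν : ProbabilityMeasure (ℕ → B)) (hE : Ergodic shiftMap (ν : Measure (ℕ → B)))
    {μ : ProbabilityMeasure (ℕ → A)} (hμX : (μ : Measure (ℕ → A)) X = 1)
    (hμπ : pushM π μ = (ν : Measure (ℕ → B)))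
    (η : ProbabilityMeasure (ℕ → A))
    (hη : MeasurePreserving shiftMap (η : Measure (ℕ → A)) (η : Measure (ℕ → A)))
    (hac : (η : Measure (ℕ → A)) ≪ (μ : Measure (ℕ → A))) :
    η ∈ MInv X ∧ pushM π η = (ν : Measure (ℕ → B)) := by
  have hXη : (η : Measure (ℕ → A)) X = 1 := by
    rw [← prob_compl_eq_zero_iff hXm]
    exact hac ((prob_compl_eq_zero_iff hXm).2 hμX)
  refine ⟨⟨hη.map_eq, hXη⟩, ?_⟩
  have hb := measurable_block (A := A) π
  haveI : IsProbabilityMeasure (pushM π η) := Measure.isProbabilityMeasure_map hb.aemeasurable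
  refine hE.eq_of_absolutelyContinuous ?_ ?_
  · refine ⟨measurable_shift, ?_⟩
    unfold pushM
    rw [Measure.map_map measurable_shift hb]
    have : (shiftMap ∘ blockMap π : (ℕ → A) → (ℕ → B)) = blockMap π ∘ shiftMap := rfl
    rw [this, ← Measure.map_map hb measurable_shift, hη.map_eq]
  · rw [← hμπ]
    exact hac.map hb

end mainlem

/-- Proposition 3.3(ii) / `pro-2.2`(ii): the set of conditional equilibrium
states over `ν` is non-empty, compact and convex; if `ν` is ergodic then its extreme points
are ergodic. -/
theorem weighted_eq_states_stmt_6 {A B : Type}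
    [Fintype A] [TopologicalSpace A] [DiscreteTopology A] [MeasurableSpace A] [BorelSpace A]
    [Fintype B] [TopologicalSpace B] [DiscreteTopology B] [MeasurableSpace B] [BorelSpace B]
    (X : Set (ℕ → A)) (Y : Set (ℕ → B)) (hX : IsSubshift X) (hY : IsSubshift Y)
    (π : A → B) (hπ : blockMap π '' X = Y)
    (φ : List A → ℝ) (hφ : Submult X φ)
    (ν : ProbabilityMeasure (ℕ → B)) (hν : ν ∈ MInv Y) :
    (CondEqSet X π (genPot φ) (ν : Measure (ℕ → B))).Nonempty ∧
    IsCompact (CondEqSet X π (genPot φ) (ν : Measure (ℕ → B))) ∧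
    ConvexPM (CondEqSet X π (genPot φ) (ν : Measure (ℕ → B))) ∧
    (Ergodic shiftMap (ν : Measure (ℕ → B)) →
      ∀ μ : ProbabilityMeasure (ℕ → A),
        IsExtremePM (CondEqSet X π (genPot φ) (ν : Measure (ℕ → B))) μ →
        Ergodic shiftMap (μ : Measure (ℕ → A))) := by
  have hXc : IsClosed X := hX.2.1.isClosed
  have hXm := hXc.measurableSet
  set S : EReal := ⨆ η ∈ {η | η ∈ MInv X ∧ pushM π η = (ν : Measure (ℕ → B))},
    eqVal X (genPot φ) η with hS
  have hle : ∀ η ∈ {η | η ∈ MInv X ∧ pushM π η = (ν : Measure (ℕ → B))},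
      eqVal X (genPot φ) η ≤ S := fun η hη =>
    le_iSup₂ (f := fun η (_ : η ∈ {η | η ∈ MInv X ∧ pushM π η = (ν : Measure (ℕ → B))}) =>
      eqVal X (genPot φ) η) η hη
  have hK := compact_K hXc π ν
  have husc := (usc_eqVal hXc hφ).mono
    (fun η (h : η ∈ {η | η ∈ MInv X ∧ pushM π η = (ν : Measure (ℕ → B))}) => h.1)
  obtain ⟨μ₀, hμ₀, hmax⟩ := husc.exists_isMaxOn (exists_lift hX hY π hπ ν hν) hK
  have hS₀ : eqVal X (genPot φ) μ₀ = S := le_antisymm (hle _ hμ₀) (iSup₂_le fun η hη => hmax hη)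
  have hSt : S ≠ ⊤ := hS₀ ▸ eqVal_ne_top hXm hφ hμ₀.1
  refine ⟨⟨μ₀, hμ₀.1, hμ₀.2, hS₀⟩, ?_, ?_, ?_⟩
  · convert husc.isCompact_inter_preimage_Ici hK S using 1
    ext η
    constructor
    · rintro ⟨h1, h2, h3⟩
      exact ⟨⟨h1, h2⟩, h3.ge⟩
    · rintro ⟨h1, h2⟩
      exact ⟨h1.1, h1.2, le_antisymm (hle _ h1) h2⟩
  · intro μ₁ h₁ μ₂ h₂ t h0 h1 μ h
    rcases h0.eq_or_lt with rfl | h0'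
    · have : μ = μ₂ := Subtype.ext (by simpa using h)
      rwa [this]
    rcases h1.eq_or_lt with rfl | h1'
    · have : μ = μ₁ := Subtype.ext (by simpa using h)
      rwa [this]
    have hm := MInv_conv h₁.1 h₂.1 h0 h1 h
    refine ⟨hm, push_conv h₁.2.1 h₂.2.1 h0 h1 h, ?_⟩
    rw [eqVal_affine hXm hφ hm h₁.1 h₂.1 h0' h1' h, h₁.2.2, h₂.2.2]
    exact ereal_conv_eq h0' h1' hSt
  · intro hE μ hμ
    obtain ⟨hμS, hext⟩ := hμ
    apply Ergodic.of_mem_extremePoints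
    rw [mem_extremePoints_iff_left]
    refine ⟨⟨⟨measurable_shift, hμS.1.1⟩, inferInstance⟩, ?_⟩
    rintro ν₁ ⟨hν₁, p₁⟩ ν₂ ⟨hν₂, p₂⟩ ⟨a, b, ha, hb, hab, hμe⟩
    have ha1 : a ≠ ⊤ := ne_top_of_le_ne_top ENNReal.one_ne_top (hab ▸ le_self_add)
    have hb1 : b ≠ ⊤ := ne_top_of_le_ne_top ENNReal.one_ne_top (hab ▸ le_add_self)
    have hat : 0 < a.toReal := ENNReal.toReal_pos ha.ne' ha1
    have hbt : 0 < b.toReal := ENNReal.toReal_pos hb.ne' hb1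
    have hs : a.toReal + b.toReal = 1 := by
      rw [← ENNReal.toReal_add ha1 hb1, hab, ENNReal.toReal_one]
    have hb2 : 1 - a.toReal = b.toReal := by linarith
    have ac₁ : ν₁ ≪ (μ : Measure (ℕ → A)) := by
      intro s h
      rw [← hμe] at h
      simp only [Measure.add_apply, Measure.smul_apply, smul_eq_mul, add_eq_zero, mul_eq_zero] at h
      exact h.1.resolve_left ha.ne'
    have ac₂ : ν₂ ≪ (μ : Measure (ℕ → A)) := by
      intro s h
      rw [← hμe] at h
      simp only [Measure.add_apply, Measure.smul_apply, smul_eq_mul, add_eq_zero, mul_eq_zero] at h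
      exact h.2.resolve_left hb.ne'
    let η₁ : ProbabilityMeasure (ℕ → A) := ⟨ν₁, p₁⟩
    let η₂ : ProbabilityMeasure (ℕ → A) := ⟨ν₂, p₂⟩
    have k₁ := comp_mem_K hXm π ν hE hμS.1.2 hμS.2.1 η₁ hν₁ ac₁
    have k₂ := comp_mem_K hXm π ν hE hμS.1.2 hμS.2.1 η₂ hν₂ ac₂
    have h : (μ : Measure (ℕ → A)) = ENNReal.ofReal a.toReal • (η₁ : Measure (ℕ → A)) +
        ENNReal.ofReal (1 - a.toReal) • (η₂ : Measure (ℕ → A)) := by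
      rw [hb2, ENNReal.ofReal_toReal ha1, ENNReal.ofReal_toReal hb1]
      exact hμe.symm
    have hlt : a.toReal < 1 := by linarith
    have haff := eqVal_affine hXm hφ hμS.1 k₁.1 k₂.1 hat hlt h
    have hμv : eqVal X (genPot φ) μ = S := hμS.2.2
    rw [hμv] at haff
    obtain ⟨e₁, e₂⟩ := ereal_conv_max hat hlt hSt (hle _ k₁) (hle _ k₂) haff
    have hEq := hext η₁ ⟨k₁.1, k₁.2, e₁⟩ η₂ ⟨k₂.1, k₂.2, e₂⟩ a.toReal hat hlt h
    have hEq' : ν₁ = ν₂ := congrArg (fun η : ProbabilityMeasure (ℕ → A) => (η : Measure (ℕ → A))) hEq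
    rw [← hμe, ← hEq', ← add_smul, hab, one_smul]
end
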